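/- Let ε > 0. There exist constants C > 0 and N such that for all integers n ≥ N and all positive integers k with k ≤ n^{1/8−ε}, one has | MP_k(n) − (π/16) k n^{−3/2} e^{π√n/√2} | ≤ C k³ n^{−7/4} e^{π√n/√2}. -/

import Mathlib

open Finset Real

/-- The number of partitions of `m` in which odd parts are not repeated. -/
noncomputable def podCount (m : ℕ) : ℕ :=
  Nat.card {P : Nat.Partition m // ∀ i ∈ P.parts, Odd i → P.parts.count i ≤ 1}

/-- The function `pod` extended to integers, vanishing for negative arguments. -/
noncomputable def podZ (m : ℤ) : ℤ := if 0 ≤ m then (podCount m.toNat : ℤ) else 0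

/-- The Andrews–Merca function `MP_k(n)`. -/
noncomputable def MP (k : ℕ) (n : ℤ) : ℤ :=
  (-1) ^ (k - 1) * ∑ j ∈ Finset.range k,
    (-1) ^ j * (podZ (n - (j : ℤ) * (2 * j + 1)) - podZ (n - ((j : ℤ) + 1) * (2 * j + 1)))

/-! ### Finite and infinite products -/

noncomputable def PhiI (q : ℂ) : ℂ := ∏' n : ℕ, (1 - q ^ (n + 1))

noncomputable def PhiF (M : ℕ) (q : ℂ) : ℂ := ∏ i ∈ range M, (1 - q ^ (i + 1))

lemma PhiF_tendsto {q : ℂ} (hq : ‖q‖ < 1) :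
    Filter.Tendsto (fun M => PhiF M q) Filter.atTop (nhds (PhiI q)) :=
  (ModularForm.multipliable_one_sub_pow hq).hasProd.tendsto_prod_nat

lemma one_sub_pow_ne {q : ℂ} (hq : ‖q‖ < 1) (n : ℕ) : 1 - q ^ (n + 1) ≠ 0 := by
  intro h
  have h1 : q ^ (n + 1) = 1 := (sub_eq_zero.mp h).symm
  have h2 : ‖q‖ ^ (n + 1) < 1 := pow_lt_one₀ (norm_nonneg _) hq (by simp)
  rw [← norm_pow, h1] at h2
  simp at h2

lemma PhiI_ne {q : ℂ} (hq : ‖q‖ < 1) : PhiI q ≠ 0 := by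
  have := tprod_one_add_ne_zero_of_summable (f := fun n : ℕ => -q ^ (n + 1)) (R := ℂ)
    (fun i => by simpa [sub_eq_add_neg] using one_sub_pow_ne hq i) (by
      simpa using (summable_nat_add_iff 1).mpr (summable_geometric_of_lt_one (norm_nonneg _) hq))
  simpa [PhiI, sub_eq_add_neg] using this

noncomputable def GF (M : ℕ) (q : ℂ) : ℂ :=
  ∏ i ∈ range M, (if Even i then 1 + q ^ (i + 1) else (1 - q ^ (i + 1))⁻¹)

lemma npow_lt_one {q : ℂ} (hq : ‖q‖ < 1) (k : ℕ) : ‖q ^ (k + 1)‖ < 1 := by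
  rw [norm_pow]; exact pow_lt_one₀ (norm_nonneg _) hq (by simp)

lemma PhiF_two_mul (M : ℕ) (q : ℂ) :
    PhiF (2 * M) q = (∏ i ∈ range M, (1 - q ^ (2 * i + 1))) * PhiF M (q ^ 2) := by
  induction M with
  | zero => simp [PhiF]
  | succ M ih =>
    have : PhiF (2 * (M + 1)) q =
        PhiF (2 * M) q * (1 - q ^ (2 * M + 1)) * (1 - q ^ (2 * M + 2)) := by
      simp [PhiF, mul_add, prod_range_succ]
    rw [this, ih, prod_range_succ]
    have : PhiF (M + 1) (q ^ 2) = PhiF M (q ^ 2) * (1 - q ^ (2 * M + 2)) := by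
      simp [PhiF, prod_range_succ, ← pow_mul, mul_add]
    rw [this]; ring

lemma GF_identity {q : ℂ} (hq : ‖q‖ < 1) (M : ℕ) :
    GF (2 * M) q * (PhiF (2 * M) q * PhiF M (q ^ 4)) = PhiF (2 * M) (q ^ 2) := by
  induction M with
  | zero => simp [GF, PhiF]
  | succ M ih =>
    have e1 : GF (2 * (M + 1)) q =
        GF (2 * M) q * (1 + q ^ (2 * M + 1)) * (1 - q ^ (2 * M + 2))⁻¹ := by
      simp [GF, mul_add, prod_range_succ]
    have e2 : PhiF (2 * (M + 1)) q =
        PhiF (2 * M) q * (1 - q ^ (2 * M + 1)) * (1 - q ^ (2 * M + 2)) := by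
      simp [PhiF, mul_add, prod_range_succ]
    have e3 : PhiF (M + 1) (q ^ 4) = PhiF M (q ^ 4) * (1 - q ^ (4 * M + 4)) := by
      simp [PhiF, prod_range_succ, ← pow_mul, mul_add]
    have e4 : PhiF (2 * (M + 1)) (q ^ 2) =
        PhiF (2 * M) (q ^ 2) * (1 - q ^ (4 * M + 2)) * (1 - q ^ (4 * M + 4)) := by
      simp only [PhiF, mul_add, prod_range_succ, ← pow_mul]
      ring_nf
    rw [e1, e2, e3, e4, ← ih]
    have := one_sub_pow_ne hq (2 * M + 1)
    have h2 : (1 - q ^ (2 * M + 2)) ≠ 0 := this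
    field_simp
    ring

noncomputable def PA (q : ℂ) : ℂ := PhiI (q ^ 2) / (PhiI q * PhiI (q ^ 4))

lemma tendsto_two_mul : Filter.Tendsto (fun M : ℕ => 2 * M) Filter.atTop Filter.atTop :=
  Filter.tendsto_id.const_mul_atTop' (by norm_num)

lemma PhiF_ne {q : ℂ} (hq : ‖q‖ < 1) (M : ℕ) : PhiF M q ≠ 0 :=
  prod_ne_zero_iff.mpr fun i _ => one_sub_pow_ne hq i

lemma GF_tendsto {q : ℂ} (hq : ‖q‖ < 1) :
    Filter.Tendsto (fun M => GF (2 * M) q) Filter.atTop (nhds (PA q)) := by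
  have h2 : ‖q ^ 2‖ < 1 := npow_lt_one hq 1
  have h4 : ‖q ^ 4‖ < 1 := npow_lt_one hq 3
  have : (fun M => GF (2 * M) q) =
      fun M => PhiF (2 * M) (q ^ 2) / (PhiF (2 * M) q * PhiF M (q ^ 4)) := by
    funext M
    rw [eq_div_iff (mul_ne_zero (PhiF_ne hq _) (PhiF_ne h4 _)), GF_identity hq]
  rw [this]
  exact ((PhiF_tendsto h2).comp tendsto_two_mul).div
    (((PhiF_tendsto hq).comp tendsto_two_mul).mul (PhiF_tendsto h4))
    (mul_ne_zero (PhiI_ne hq) (PhiI_ne h4))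

/-- Second product form, over parts not congruent to 2 mod 4. -/
noncomputable def HF (M : ℕ) (q : ℂ) : ℂ :=
  ∏ i ∈ range M, ((1 - q ^ (2 * i + 1))⁻¹ * (1 - q ^ (4 * i + 4))⁻¹)

lemma HF_tendsto {q : ℂ} (hq : ‖q‖ < 1) :
    Filter.Tendsto (fun M => HF M q) Filter.atTop (nhds (PA q)) := by
  have h2 : ‖q ^ 2‖ < 1 := npow_lt_one hq 1
  have h4 : ‖q ^ 4‖ < 1 := npow_lt_one hq 3
  have : (fun M => HF M q) =
      fun M => PhiF M (q ^ 2) / (PhiF (2 * M) q * PhiF M (q ^ 4)) := by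
    funext M
    have ha : (∏ i ∈ range M, (1 - q ^ (2 * i + 1))) ≠ 0 :=
      prod_ne_zero_iff.mpr fun i _ => one_sub_pow_ne hq (2 * i)
    have hb : HF M q = (∏ i ∈ range M, (1 - q ^ (2 * i + 1)))⁻¹ * (PhiF M (q ^ 4))⁻¹ := by
      simp [HF, PhiF, prod_mul_distrib, ← pow_mul, mul_add]
    rw [hb, PhiF_two_mul]
    have := PhiF_ne h4 M
    have := PhiF_ne h2 M
    field_simp
  rw [this]
  exact (PhiF_tendsto h2).div
    (((PhiF_tendsto hq).comp tendsto_two_mul).mul (PhiF_tendsto h4))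
    (mul_ne_zero (PhiI_ne hq) (PhiI_ne h4))

/-! ### Power series -/

open PowerSeries in
/-- The power series `p` converges absolutely in the unit disc to `F`. -/
def EvT (p : PowerSeries ℝ) (F : ℂ → ℂ) : Prop :=
  ∀ q : ℂ, ‖q‖ < 1 → (Summable fun n => ‖((coeff n p : ℝ) : ℂ) * q ^ n‖) ∧
    ∑' n, ((coeff n p : ℝ) : ℂ) * q ^ n = F q

open PowerSeries in
lemma EvT.mul {p r : PowerSeries ℝ} {F G : ℂ → ℂ} (hp : EvT p F) (hr : EvT r G) :
    EvT (p * r) (fun q => F q * G q) := by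
  intro q hq
  obtain ⟨h1, h2⟩ := hp q hq
  obtain ⟨h3, h4⟩ := hr q hq
  have key : ∀ n, ((coeff n (p * r) : ℝ) : ℂ) * q ^ n =
      ∑ kl ∈ antidiagonal n, (((coeff kl.1 p : ℝ) : ℂ) * q ^ kl.1) *
        (((coeff kl.2 r : ℝ) : ℂ) * q ^ kl.2) := by
    intro n
    rw [coeff_mul, Complex.ofReal_sum, sum_mul]
    refine sum_congr rfl fun kl hkl => ?_
    rw [← mem_antidiagonal.mp hkl, pow_add, Complex.ofReal_mul]; ring
  generalize hc : (fun n => ((coeff n (p * r) : ℝ) : ℂ) * q ^ n) = c at *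
  generalize ha : (fun n => ((coeff n p : ℝ) : ℂ) * q ^ n) = a at *
  generalize hb : (fun n => ((coeff n r : ℝ) : ℂ) * q ^ n) = b at *
  have key' : c = fun n => ∑ kl ∈ antidiagonal n, a kl.1 * b kl.2 := by
    funext n
    rw [← hc, ← ha, ← hb]
    exact key n
  have h1' : Summable fun n => ‖a n‖ := by rw [← ha]; exact h1
  have h3' : Summable fun n => ‖b n‖ := by rw [← hb]; exact h3
  have h5 := summable_norm_sum_mul_antidiagonal_of_summable_norm h1' h3'
  have h6 := tsum_mul_tsum_eq_tsum_sum_antidiagonal_of_summable_norm h1' h3'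
  have h2' : ∑' n, a n = F q := h2
  have h4' : ∑' n, b n = G q := h4
  rw [h2', h4'] at h6
  constructor
  · have : (fun n => ‖((coeff n (p * r) : ℝ) : ℂ) * q ^ n‖) = fun n => ‖c n‖ := by
      rw [← hc]
    rw [this, key']
    exact h5
  · rw [key']; exact h6.symm

lemma EvT.one : EvT 1 (fun _ => 1) := by
  intro q hq
  have : ∀ n, ((PowerSeries.coeff n (1 : PowerSeries ℝ) : ℝ) : ℂ) * q ^ n
      = if n = 0 then 1 else 0 := by
    intro n; rw [PowerSeries.coeff_one]; split_ifs with h <;> simp [h]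
  simp_rw [this]
  refine ⟨?_, by simp⟩
  refine summable_of_ne_finset_zero (s := {0}) ?_
  intro b hb; simp at hb; simp [hb]

lemma EvT.prod {p : ℕ → PowerSeries ℝ} {F : ℕ → ℂ → ℂ} (h : ∀ i, EvT (p i) (F i)) (M : ℕ) :
    EvT (∏ i ∈ range M, p i) (fun q => ∏ i ∈ range M, F i q) := by
  induction M with
  | zero => simpa using EvT.one
  | succ M ih => simp only [prod_range_succ]; exact ih.mul (h M)

noncomputable def fpod (i c : ℕ) : ℝ := if Odd i ∧ 2 ≤ c then 0 else 1

open PowerSeries in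
noncomputable def fac (i : ℕ) : PowerSeries ℝ :=
  mk fun n => if (i + 1) ∣ n then fpod (i + 1) (n / (i + 1)) else 0

open PowerSeries PowerSeries.WithPiTopology in
lemma fac_eq (i : ℕ) :
    (1 + ∑' j, fpod (i + 1) (j + 1) • (X : PowerSeries ℝ) ^ ((i + 1) * (j + 1))) = fac i := by
  ext n
  rw [map_add, (Nat.Partition.summable_genFun_term fpod i).map_tsum _
    (WithPiTopology.continuous_coeff _ _)]
  simp only [fac, coeff_mk, map_smul, coeff_X_pow, coeff_one, smul_eq_mul, mul_ite, mul_one,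
    mul_zero]
  rcases Nat.eq_zero_or_pos n with rfl | hn
  · simp [fpod]
  · simp only [hn.ne', if_false, zero_add]
    split_ifs with hd
    · obtain ⟨c, rfl⟩ := hd
      have hc : c ≠ 0 := by rintro rfl; simp at hn
      obtain ⟨d, rfl⟩ := Nat.exists_eq_add_one_of_ne_zero hc
      rw [tsum_eq_single d]
      · simp
      · intro b hb
        rw [if_neg]
        intro h
        have := Nat.eq_of_mul_eq_mul_left (by omega) h
        omega
    · refine (tsum_congr fun j => ?_).trans tsum_zero
      rw [if_neg]
      rintro rfl
      exact hd (dvd_mul_right _ _)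

lemma coeff_fac (i n : ℕ) : PowerSeries.coeff n (fac i) =
    if (i + 1) ∣ n then fpod (i + 1) (n / (i + 1)) else 0 := by
  simp [fac]

lemma coeff_fac_nonneg (i n : ℕ) : 0 ≤ PowerSeries.coeff n (fac i) := by
  rw [coeff_fac, fpod]; split_ifs <;> norm_num

lemma EvT_fac (i : ℕ) :
    EvT (fac i) (fun q => if Even i then 1 + q ^ (i + 1) else (1 - q ^ (i + 1))⁻¹) := by
  intro q hq
  have hinj : Function.Injective (fun j : ℕ => (i + 1) * j) := fun a b h =>
    Nat.eq_of_mul_eq_mul_left (by omega) h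
  have hz : ∀ n ∉ Set.range (fun j : ℕ => (i + 1) * j),
      ((PowerSeries.coeff n (fac i) : ℝ) : ℂ) * q ^ n = 0 := by
    intro n hn
    rw [coeff_fac, if_neg]
    · simp
    · rintro ⟨c, rfl⟩
      exact hn ⟨c, rfl⟩
  have hc : ∀ j : ℕ, ((PowerSeries.coeff ((i + 1) * j) (fac i) : ℝ) : ℂ) * q ^ ((i + 1) * j) =
      (fpod (i + 1) j : ℂ) * (q ^ (i + 1)) ^ j := by
    intro j
    rw [coeff_fac, if_pos (dvd_mul_right _ _), Nat.mul_div_cancel_left _ (by omega), pow_mul]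
  have hm : ‖q ^ (i + 1)‖ < 1 := npow_lt_one hq i
  by_cases he : Even i
  · have hodd : Odd (i + 1) := he.add_one
    have hf : ∀ j ∉ range 2, (fpod (i + 1) j : ℂ) * (q ^ (i + 1)) ^ j = 0 := by
      intro j hj
      have : 2 ≤ j := not_lt.mp (fun h => hj (mem_range.mpr h))
      simp [fpod, hodd, this]
    constructor
    · rw [← hinj.summable_iff (by intro n hn; simp [hz n hn])]
      refine summable_of_ne_finset_zero (s := range 2) ?_
      intro j hj
      simp only [Function.comp, hc, hf j hj, norm_zero]
    · simp only [if_pos he]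
      refine HasSum.tsum_eq ?_
      rw [← hinj.hasSum_iff hz]
      have : (fun n => ((PowerSeries.coeff n (fac i) : ℝ) : ℂ) * q ^ n) ∘ (fun j => (i + 1) * j) =
          fun j => (fpod (i + 1) j : ℂ) * (q ^ (i + 1)) ^ j := by
        funext j; exact hc j
      rw [this]
      have h7 : HasSum (fun j => (fpod (i + 1) j : ℂ) * (q ^ (i + 1)) ^ j)
          (∑ j ∈ range 2, (fpod (i + 1) j : ℂ) * (q ^ (i + 1)) ^ j) :=
        hasSum_sum_of_ne_finset_zero hf
      simpa [sum_range_succ, fpod] using h7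
  · have hodd : ¬ Odd (i + 1) := by
      rw [Nat.not_odd_iff_even]; exact (Nat.not_even_iff_odd.mp he).add_one
    have hf : ∀ j, (fpod (i + 1) j : ℂ) = 1 := by
      intro j; simp [fpod, hodd]
    have hcc : (fun n => ((PowerSeries.coeff n (fac i) : ℝ) : ℂ) * q ^ n) ∘ (fun j => (i + 1) * j) =
          fun j => (q ^ (i + 1)) ^ j := by
        funext j; simp only [Function.comp, hc, hf, one_mul]
    constructor
    · rw [← hinj.summable_iff (by intro n hn; simp [hz n hn])]
      have : (fun n => ‖((PowerSeries.coeff n (fac i) : ℝ) : ℂ) * q ^ n‖) ∘ (fun j => (i + 1) * j) =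
          fun j => ‖q ^ (i + 1)‖ ^ j := by
        funext j; simp only [Function.comp, hc, hf, one_mul, norm_pow]
      rw [this]
      exact summable_geometric_of_lt_one (norm_nonneg _) hm
    · simp only [if_neg he]
      refine HasSum.tsum_eq ?_
      rw [← hinj.hasSum_iff hz, hcc]
      exact hasSum_geometric_of_norm_lt_one hm

lemma coeff_genFun_pod (n : ℕ) :
    PowerSeries.coeff n (Nat.Partition.genFun fpod) = (podCount n : ℝ) := by
  classical
  rw [Nat.Partition.coeff_genFun]
  have : ∀ p : n.Partition, p.parts.toFinsupp.prod fpod =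
      if (∀ i ∈ p.parts, Odd i → p.parts.count i ≤ 1) then 1 else 0 := by
    intro p
    have h1 : p.parts.toFinsupp.prod fpod = ∏ i ∈ p.parts.toFinset,
        (if Odd i → p.parts.count i ≤ 1 then (1 : ℝ) else 0) := by
      rw [Finsupp.prod, Multiset.toFinsupp_support]
      refine prod_congr rfl fun i _ => ?_
      rw [Multiset.toFinsupp_apply, fpod]
      by_cases ho : Odd i <;> by_cases hc : p.parts.count i ≤ 1
      · simp [ho, hc]
      · simp [ho, hc]
      · simp [ho]
      · simp [ho]
    rw [h1, prod_boole]
    simp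
  simp_rw [this]
  rw [sum_boole, podCount, Nat.card_eq_fintype_card, Fintype.card_subtype]

noncomputable def gcoef (M n : ℕ) : ℝ := PowerSeries.coeff n (∏ i ∈ range M, fac i)

open PowerSeries.WithPiTopology in
lemma gcoef_tendsto (n : ℕ) :
    Filter.Tendsto (fun M => gcoef M n) Filter.atTop (nhds (podCount n : ℝ)) := by
  have h := Nat.Partition.hasProd_genFun fpod
  have h2 := h.tendsto_prod_nat
  rw [PowerSeries.WithPiTopology.tendsto_iff_coeff_tendsto] at h2
  have h3 := h2 n
  rw [coeff_genFun_pod] at h3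
  simp only [fac_eq] at h3
  exact h3

lemma gcoef_nonneg (M n : ℕ) : 0 ≤ gcoef M n := by
  induction M generalizing n with
  | zero => simp only [gcoef, range_zero, prod_empty, PowerSeries.coeff_one]; split_ifs <;> norm_num
  | succ M ih =>
    rw [gcoef, prod_range_succ, PowerSeries.coeff_mul]
    exact sum_nonneg fun kl _ => mul_nonneg (ih _) (coeff_fac_nonneg _ _)

lemma gcoef_mono (n : ℕ) : Monotone (fun M => gcoef M n) := by
  refine monotone_nat_of_le_succ fun M => ?_
  conv_rhs => rw [gcoef, prod_range_succ, PowerSeries.coeff_mul]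
  have h0 : PowerSeries.coeff 0 (fac M) = 1 := by
    rw [coeff_fac]; simp [fpod]
  calc gcoef M n = gcoef M n * PowerSeries.coeff 0 (fac M) := by rw [h0, mul_one]
    _ ≤ _ := single_le_sum (f := fun kl : ℕ × ℕ => PowerSeries.coeff kl.1 (∏ i ∈ range M, fac i) *
        PowerSeries.coeff kl.2 (fac M))
        (fun kl _ => mul_nonneg (gcoef_nonneg _ _) (coeff_fac_nonneg _ _))
        (a := (n, 0)) (by simp)

lemma gcoef_le (M n : ℕ) : gcoef M n ≤ podCount n :=
  (gcoef_mono n).ge_of_tendsto (gcoef_tendsto n) M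

lemma EvT_G (M : ℕ) : EvT (∏ i ∈ range M, fac i) (GF M) := EvT.prod EvT_fac M

lemma summable_pod_real {r : ℝ} (h0 : 0 ≤ r) (h1 : r < 1) :
    Summable fun n => (podCount n : ℝ) * r ^ n := by
  have hq : ‖(r : ℂ)‖ < 1 := by rw [Complex.norm_real, norm_of_nonneg h0]; exact h1
  obtain ⟨B, hB⟩ := (Metric.isBounded_range_of_tendsto _ (GF_tendsto hq)).exists_norm_le
  refine summable_of_sum_range_le (c := B) (fun n => by positivity) fun N => ?_
  have ht : Filter.Tendsto (fun M => ∑ n ∈ range N, gcoef (2 * M) n * r ^ n) Filter.atTop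
      (nhds (∑ n ∈ range N, (podCount n : ℝ) * r ^ n)) :=
    tendsto_finsetSum _ fun n _ => ((gcoef_tendsto n).comp tendsto_two_mul).mul_const _
  refine le_of_tendsto ht (Filter.Eventually.of_forall fun M => ?_)
  obtain ⟨hs, he⟩ := EvT_G (2 * M) r hq
  have hs' : Summable fun n => gcoef (2 * M) n * r ^ n := by
    refine hs.congr fun n => ?_
    have : ((gcoef (2 * M) n : ℝ) : ℂ) * (r : ℂ) ^ n = ((gcoef (2 * M) n * r ^ n : ℝ) : ℂ) := by
      push_cast; rfl
    change ‖((gcoef (2 * M) n : ℝ) : ℂ) * (r : ℂ) ^ n‖ = _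
    rw [this, Complex.norm_real, norm_of_nonneg (mul_nonneg (gcoef_nonneg _ _) (by positivity))]
  have he' : ((∑' n, gcoef (2 * M) n * r ^ n : ℝ) : ℂ) = GF (2 * M) r := by
    rw [← he, Complex.ofReal_tsum]
    refine tsum_congr fun n => ?_
    push_cast; rfl
  calc _ ≤ ∑' n, gcoef (2 * M) n * r ^ n :=
        hs'.sum_le_tsum _ fun n _ => mul_nonneg (gcoef_nonneg _ _) (by positivity)
    _ ≤ ‖((∑' n, gcoef (2 * M) n * r ^ n : ℝ) : ℂ)‖ := by
        rw [Complex.norm_real]; exact le_abs_self _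
    _ ≤ B := by rw [he']; exact hB _ ⟨M, rfl⟩

lemma summable_pod {q : ℂ} (hq : ‖q‖ < 1) :
    Summable fun n => ‖(podCount n : ℂ) * q ^ n‖ := by
  simpa using summable_pod_real (norm_nonneg q) hq

lemma tsum_pod {q : ℂ} (hq : ‖q‖ < 1) : ∑' n, (podCount n : ℂ) * q ^ n = PA q := by
  have h1 : Filter.Tendsto (fun M => ∑' n, ((gcoef (2 * M) n : ℝ) : ℂ) * q ^ n) Filter.atTop
      (nhds (∑' n, (podCount n : ℂ) * q ^ n)) := by
    refine tendsto_tsum_of_dominated_convergence (summable_pod hq) (fun n => ?_)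
      (Filter.Eventually.of_forall fun M n => ?_)
    · refine Filter.Tendsto.mul_const _ ?_
      have := (Complex.continuous_ofReal.tendsto _).comp
        ((gcoef_tendsto n).comp tendsto_two_mul)
      rw [Complex.ofReal_natCast] at this
      exact this
    · rw [norm_mul, norm_mul, Complex.norm_real, norm_of_nonneg (gcoef_nonneg _ _)]
      refine mul_le_mul_of_nonneg_right ?_ (norm_nonneg _)
      simpa using gcoef_le (2 * M) n
  have h2 : (fun M => ∑' n, ((gcoef (2 * M) n : ℝ) : ℂ) * q ^ n) = fun M => GF (2 * M) q := by
    funext M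
    exact (EvT_G (2 * M) q hq).2
  rw [h2] at h1
  exact tendsto_nhds_unique h1 (GF_tendsto hq)

/-! ### Minor arc bound -/

lemma norm_inv_one_sub_le {w : ℂ} (hw : ‖w‖ < 1) :
    ‖(1 - w)⁻¹‖ ≤ (1 - ‖w‖)⁻¹ * Real.exp (-(‖w‖ - w.re)) := by
  have h1 := Complex.hasSum_re (Complex.hasSum_taylorSeries_neg_log hw)
  have hw' : ‖((‖w‖ : ℝ) : ℂ)‖ < 1 := by simpa using hw
  have h2 := Complex.hasSum_re (Complex.hasSum_taylorSeries_neg_log hw')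
  have h3 := h2.sub h1
  have hterm : ∀ n : ℕ, 0 ≤ ((((‖w‖ : ℝ) : ℂ) ^ n / n).re - (w ^ n / n).re) := by
    intro n
    have e1 : (((‖w‖ : ℝ) : ℂ) ^ n / n).re = ‖w‖ ^ n / n := by
      rw [← Complex.ofReal_pow, ← Complex.ofReal_natCast, ← Complex.ofReal_div, Complex.ofReal_re]
    have e2 : (w ^ n / n).re ≤ ‖w‖ ^ n / n := by
      refine (Complex.re_le_norm _).trans (le_of_eq ?_)
      simp
    linarith
  have h4 := le_hasSum h3 1 (fun j _ => hterm j)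
  simp only [pow_one, Nat.cast_one, div_one, Complex.ofReal_re, Complex.neg_re,
    Complex.log_re] at h4
  have hpos : 0 < 1 - ‖w‖ := by linarith
  have hne : 0 < ‖1 - w‖ := by
    rw [norm_pos_iff, sub_ne_zero]
    rintro rfl
    simp at hw
  have e3 : ‖(1 : ℂ) - ((‖w‖ : ℝ) : ℂ)‖ = 1 - ‖w‖ := by
    rw [← Complex.ofReal_one, ← Complex.ofReal_sub, Complex.norm_real, norm_of_nonneg hpos.le]
  rw [e3] at h4
  rw [norm_inv, ← Real.exp_log hne, ← Real.exp_log hpos, ← Real.exp_neg, ← Real.exp_neg,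
    ← Real.exp_add, Real.exp_le_exp]
  linarith

lemma norm_HF_le {q : ℂ} (hq : ‖q‖ < 1) (M : ℕ) :
    ‖HF M q‖ ≤ ‖HF M (‖q‖ : ℝ)‖ *
      Real.exp (-∑ i ∈ range M, (‖q‖ ^ (2 * i + 1) - (q ^ (2 * i + 1)).re)) := by
  rw [HF, HF, norm_prod, norm_prod, ← sum_neg_distrib, Real.exp_sum, ← prod_mul_distrib]
  refine prod_le_prod (fun i _ => norm_nonneg _) fun i _ => ?_
  have aux : ∀ k : ℕ, ‖(1 - (((‖q‖ : ℝ) : ℂ)) ^ (k + 1))⁻¹‖ = (1 - ‖q ^ (k + 1)‖)⁻¹ := by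
    intro k
    have := npow_lt_one hq k
    rw [norm_inv, ← Complex.ofReal_pow, ← Complex.ofReal_one, ← Complex.ofReal_sub,
      Complex.norm_real, norm_of_nonneg, norm_pow]
    rw [norm_pow] at this; linarith
  have h1 := norm_inv_one_sub_le (npow_lt_one hq (2 * i))
  have h2 := norm_inv_one_sub_le (npow_lt_one hq (4 * i + 3))
  rw [norm_mul, norm_mul, aux (2 * i)]
  have aux2 := aux (4 * i + 3)
  have h3 : ‖(1 - q ^ (4 * i + 4))⁻¹‖ ≤ ‖(1 - (((‖q‖ : ℝ) : ℂ)) ^ (4 * i + 4))⁻¹‖ := by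
    have e : 4 * i + 3 + 1 = 4 * i + 4 := rfl
    rw [e] at aux2 h2
    rw [aux2]
    refine h2.trans ?_
    have hh : Real.exp (-(‖q ^ (4 * i + 4)‖ - (q ^ (4 * i + 4)).re)) ≤ 1 := by
      rw [Real.exp_le_one_iff]
      have := Complex.re_le_norm (q ^ (4 * i + 4))
      linarith
    have h0 : 0 ≤ (1 - ‖q ^ (4 * i + 4)‖)⁻¹ := by
      have := npow_lt_one hq (4 * i + 3)
      rw [e] at this
      exact inv_nonneg.mpr (by linarith)
    nlinarith
  calc _ ≤ ((1 - ‖q ^ (2 * i + 1)‖)⁻¹ * Real.exp (-(‖q ^ (2 * i + 1)‖ - (q ^ (2 * i + 1)).re))) *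
        ‖(1 - (((‖q‖ : ℝ) : ℂ)) ^ (4 * i + 4))⁻¹‖ := by
          refine mul_le_mul h1 h3 (norm_nonneg _) ?_
          exact (norm_nonneg _).trans h1
    _ = _ := by rw [norm_pow]; ring

lemma hasSum_odd_pow {q : ℂ} (hq : ‖q‖ < 1) :
    HasSum (fun i : ℕ => q ^ (2 * i + 1)) (q / (1 - q ^ 2)) := by
  have h := (hasSum_geometric_of_norm_lt_one (npow_lt_one hq 1)).mul_left q
  have e : (fun i : ℕ => q ^ (2 * i + 1)) = fun i => q * (q ^ (1 + 1)) ^ i := by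
    funext i; rw [← pow_mul, pow_succ']
  rw [e, div_eq_mul_inv]
  exact h

lemma norm_PA_le {q : ℂ} (hq : ‖q‖ < 1) :
    ‖PA q‖ ≤ ‖PA (‖q‖ : ℝ)‖ *
      Real.exp (-(‖q‖ / (1 - ‖q‖ ^ 2) - (q / (1 - q ^ 2)).re)) := by
  have hr : ‖((‖q‖ : ℝ) : ℂ)‖ < 1 := by simpa using hq
  have h1 := (Complex.hasSum_re (hasSum_odd_pow hr)).sub (Complex.hasSum_re (hasSum_odd_pow hq))
  have e : ((((‖q‖ : ℝ) : ℂ)) / (1 - (((‖q‖ : ℝ) : ℂ)) ^ 2)).re = ‖q‖ / (1 - ‖q‖ ^ 2) := by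
    rw [← Complex.ofReal_pow, ← Complex.ofReal_one, ← Complex.ofReal_sub, ← Complex.ofReal_div,
      Complex.ofReal_re]
  rw [e] at h1
  have h2 := h1.tendsto_sum_nat
  refine le_of_tendsto_of_tendsto (HF_tendsto hq).norm
    ((HF_tendsto hr).norm.mul ((Real.continuous_exp.tendsto _).comp h2.neg)) ?_
  refine Filter.Eventually.of_forall fun M => ?_
  have := norm_HF_le hq M
  simp only [Function.comp]
  have e2 : ∀ i : ℕ, ((((‖q‖ : ℝ) : ℂ)) ^ (2 * i + 1)).re = ‖q‖ ^ (2 * i + 1) := fun i => by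
    rw [← Complex.ofReal_pow, Complex.ofReal_re]
  simp only [e2]
  exact this

lemma minor_exponent {x y : ℝ} (hx : 0 < x) (hx1 : x ≤ 1) (hxy : x ≤ |y|) (hy : |y| ≤ π) :
    1 / (70 * x) ≤ Real.exp (-x) / (1 - Real.exp (-x) ^ 2) -
      (Complex.exp (-(x + y * Complex.I)) / (1 - Complex.exp (-(x + y * Complex.I)) ^ 2)).re := by
  set s := Real.sinh x with hs
  have hs0 : x ≤ s := Real.self_le_sinh_iff.mpr hx.le
  have hs1 : s ≤ 2 * x := by
    have h1 := abs_le.mp (Real.abs_exp_sub_one_sub_id_le (x := x) (by rw [abs_of_pos hx]; exact hx1))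
    have h2 := Real.add_one_le_exp (-x)
    rw [hs, Real.sinh_eq]
    nlinarith
  have hspos : 0 < s := by linarith
  have e1 : Real.exp (-x) / (1 - Real.exp (-x) ^ 2) = 1 / (2 * s) := by
    rw [hs, Real.sinh_eq, Real.exp_neg]
    have h1 : 1 < Real.exp x := Real.one_lt_exp_iff.mpr hx
    have h3 : Real.exp x - (Real.exp x)⁻¹ ≠ 0 := by
      have := inv_lt_one_of_one_lt₀ h1
      linarith
    have h4 : Real.exp x ^ 2 - 1 ≠ 0 := by nlinarith
    field_simp
  have key : ∀ z : ℂ, 2 * Complex.sinh z ≠ 0 →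
      Complex.exp (-z) / (1 - Complex.exp (-z) ^ 2) = (2 * Complex.sinh z)⁻¹ := by
    intro z hz
    have h2 : 2 * Complex.sinh z = Complex.exp z - Complex.exp (-z) := by
      rw [Complex.sinh]; ring
    have h3 : Complex.exp (-z) * (2 * Complex.sinh z) = 1 - Complex.exp (-z) ^ 2 := by
      rw [h2, mul_sub, ← Complex.exp_add]; simp [sq]
    rw [← h3]
    have := Complex.exp_ne_zero (-z)
    field_simp
  have hsinh : Complex.sinh (x + y * Complex.I) =
      ((s * Real.cos y : ℝ) : ℂ) + ((Real.cosh x * Real.sin y : ℝ) : ℂ) * Complex.I := by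
    rw [Complex.sinh_add, Complex.sinh_mul_I, Complex.cosh_mul_I, hs]
    push_cast; ring
  have hcosh : Real.cosh x ^ 2 = s ^ 2 + 1 := by rw [hs]; exact Real.cosh_sq x
  have hsc := Real.sin_sq_add_cos_sq y
  have hnsq : Complex.normSq (2 * Complex.sinh (x + y * Complex.I)) =
      4 * (s ^ 2 + Real.sin y ^ 2) := by
    rw [Complex.normSq_mul, hsinh, Complex.normSq_add_mul_I]
    have : Complex.normSq 2 = 4 := by
      rw [show (2 : ℂ) = ((2 : ℝ) : ℂ) by norm_num, Complex.normSq_ofReal]; norm_num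
    rw [this, mul_pow, mul_pow, hcosh]
    have : Real.cos y ^ 2 = 1 - Real.sin y ^ 2 := by linarith
    rw [this]; ring
  have hne : 2 * Complex.sinh (x + y * Complex.I) ≠ 0 := by
    intro h
    rw [h, map_zero] at hnsq
    nlinarith [sq_nonneg (Real.sin y)]
  have hre : (Complex.exp (-(x + y * Complex.I)) /
      (1 - Complex.exp (-(x + y * Complex.I)) ^ 2)).re =
      (2 * (s * Real.cos y)) / (4 * (s ^ 2 + Real.sin y ^ 2)) := by
    rw [key _ hne, Complex.inv_re, hnsq, hsinh]
    have h2 : ∀ a b : ℝ, (2 * ((a : ℂ) + (b : ℂ) * Complex.I)).re = 2 * a := by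
      intro a b; simp
    rw [h2]
  rw [hre, e1]
  have hD : 0 < s ^ 2 + Real.sin y ^ 2 := by positivity
  by_cases hc : Real.cos y ≤ 0
  · have h1 : (2 * (s * Real.cos y)) / (4 * (s ^ 2 + Real.sin y ^ 2)) ≤ 0 :=
      div_nonpos_of_nonpos_of_nonneg (by nlinarith) (by positivity)
    have h2 : 1 / (70 * x) ≤ 1 / (2 * s) := one_div_le_one_div_of_le (by positivity) (by linarith)
    linarith
  · have hy2 : |y| ≤ π / 2 := by
      by_contra h
      apply hc
      rw [← Real.cos_abs]
      exact Real.cos_nonpos_of_pi_div_two_le_of_le (by linarith) (by linarith [Real.pi_pos])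
    have h1 := Real.mul_le_sin (abs_nonneg y) hy2
    have h2 : Real.sin |y| ^ 2 = Real.sin y ^ 2 := by
      rcases abs_cases y with h | h <;> rw [h.1] <;> simp
    have h3 : s / 4 ≤ Real.sin |y| := by
      have : 2 / π ≥ 1 / 2 := by
        rw [ge_iff_le, div_le_div_iff₀ (by norm_num) Real.pi_pos]
        linarith [Real.pi_le_four]
      nlinarith [abs_nonneg y]
    have h4 : s ^ 2 ≤ 16 * Real.sin y ^ 2 := by
      rw [← h2]; nlinarith
    have h5 : (2 * (s * Real.cos y)) / (4 * (s ^ 2 + Real.sin y ^ 2)) ≤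
        (2 * s) / (4 * (s ^ 2 + Real.sin y ^ 2)) := by
      gcongr
      nlinarith [Real.cos_le_one y]
    have h6 : 1 / (2 * s) - (2 * s) / (4 * (s ^ 2 + Real.sin y ^ 2)) =
        Real.sin y ^ 2 / (2 * s * (s ^ 2 + Real.sin y ^ 2)) := by
      field_simp; ring
    have h7 : 1 / (70 * x) ≤ Real.sin y ^ 2 / (2 * s * (s ^ 2 + Real.sin y ^ 2)) := by
      rw [div_le_div_iff₀ (by positivity) (by positivity)]
      have h8 : 2 * s * (s ^ 2 + Real.sin y ^ 2) ≤ 2 * s * (17 * Real.sin y ^ 2) :=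
        mul_le_mul_of_nonneg_left (by linarith) (by positivity)
      have h9 : 2 * s * (17 * Real.sin y ^ 2) ≤ 2 * (2 * x) * (17 * Real.sin y ^ 2) :=
        mul_le_mul_of_nonneg_right (by linarith) (by positivity)
      have h10 : 0 ≤ x * Real.sin y ^ 2 := by positivity
      linarith
    linarith

/-! ### Modular transformation -/

lemma csqrt_eq {v : ℂ} (hv : v ≠ 0) : Complex.sqrt v = Complex.exp (Complex.log v * 2⁻¹) := by
  rw [Complex.sqrt, Complex.cpow_def_of_ne_zero hv]

lemma csqrt_ofReal_mul {c : ℝ} (hc : 0 < c) {v : ℂ} (hv : v ≠ 0) :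
    Complex.sqrt (c * v) = (Real.sqrt c : ℂ) * Complex.sqrt v := by
  have hc' : (c : ℂ) ≠ 0 := by exact_mod_cast hc.ne'
  rw [csqrt_eq (mul_ne_zero hc' hv), csqrt_eq hv, Complex.log_ofReal_mul hc hv, add_mul,
    Complex.exp_add]
  congr 1
  rw [Real.sqrt_eq_rpow, Real.rpow_def_of_pos hc]
  push_cast
  norm_num

lemma csqrt_I_mul {v : ℂ} (hv : 0 < v.re) :
    (Complex.sqrt Complex.I)⁻¹ * Complex.sqrt (Complex.I * v) = Complex.sqrt v := by
  have hv0 : v ≠ 0 := by rintro rfl; simp at hv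
  have harg : |v.arg| < π / 2 := Complex.abs_arg_lt_pi_div_two_iff.mpr (Or.inl hv)
  have hlog : Complex.log (Complex.I * v) = Complex.log Complex.I + Complex.log v := by
    refine Complex.log_mul Complex.I_ne_zero hv0 ?_
    rw [Complex.arg_I]
    have := abs_lt.mp harg
    constructor <;> linarith [Real.pi_pos]
  rw [csqrt_eq (mul_ne_zero Complex.I_ne_zero hv0), csqrt_eq hv0, csqrt_eq Complex.I_ne_zero, hlog,
    add_mul, Complex.exp_add, ← mul_assoc, inv_mul_cancel₀ (Complex.exp_ne_zero _), one_mul]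

lemma csqrt_sq (v : ℂ) : Complex.sqrt v ^ 2 = v := by
  have := Complex.cpow_nat_inv_pow v (n := 2) (by norm_num)
  simpa [Complex.sqrt] using this

lemma csqrt_ne {v : ℂ} (hv : v ≠ 0) : Complex.sqrt v ≠ 0 := by
  rw [csqrt_eq hv]; exact Complex.exp_ne_zero _

lemma csqrt_sub_one_le (u : ℝ) : ‖Complex.sqrt (1 + u * Complex.I) - 1‖ ≤ |u| := by
  set s := Complex.sqrt (1 + u * Complex.I) with hs
  have h1 : (s - 1) * (s + 1) = u * Complex.I := by
    have := csqrt_sq (1 + u * Complex.I)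
    rw [← hs] at this
    linear_combination this
  have h2 : 0 ≤ s.re := by
    rw [hs, Complex.sqrt, Complex.cpow_inv_two_re]; exact Real.sqrt_nonneg _
  have h3 : 1 ≤ ‖s + 1‖ := by
    refine le_trans ?_ (Complex.re_le_norm _)
    simp [h2]
  have h4 : ‖s - 1‖ * ‖s + 1‖ = |u| := by
    rw [← norm_mul, h1]; simp
  nlinarith [norm_nonneg (s - 1)]

lemma eta_eq_PhiI (w : ℂ) : ModularForm.eta (Complex.I * (w / (2 * π))) =
    Complex.exp (-w / 24) * PhiI (Complex.exp (-w)) := by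
  have hpi : (π : ℂ) ≠ 0 := by exact_mod_cast Real.pi_ne_zero
  have e : 2 * (π : ℂ) * Complex.I * (Complex.I * (w / (2 * π))) = -w := by
    have := Complex.I_mul_I
    field_simp
    linear_combination w * this
  rw [ModularForm.eta, PhiI]
  congr 1
  · rw [Function.Periodic.qParam, e]; norm_num
  · simp_rw [ModularForm.eta_q_eq_pow, e]

lemma PhiI_modular {w : ℂ} (hw : 0 < w.re) :
    PhiI (Complex.exp (-w)) * (Complex.sqrt (w / (2 * π)) * Complex.exp (-w / 24)) =
      Complex.exp (-(4 * π ^ 2 / w) / 24) * PhiI (Complex.exp (-(4 * π ^ 2 / w))) := by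
  have hpi : (π : ℂ) ≠ 0 := by exact_mod_cast Real.pi_ne_zero
  have hw0 : w ≠ 0 := by rintro rfl; simp at hw
  have hre : 0 < (w / (2 * π)).re := by
    have : w / (2 * π) = w / ((2 * π : ℝ) : ℂ) := by push_cast; rfl
    rw [this, Complex.div_ofReal_re]
    have := Real.pi_pos
    positivity
  have hmem : Complex.I * (w / (2 * π)) ∈ UpperHalfPlane.upperHalfPlaneSet := by
    change 0 < (Complex.I * (w / (2 * π))).im
    rw [Complex.I_mul_im]; exact hre
  have h := ModularForm.eta_comp_eq_csqrt_I_inv hmem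
  have e : -1 / (Complex.I * (w / (2 * π))) = Complex.I * ((4 * π ^ 2 / w) / (2 * π)) := by
    have := Complex.I_mul_I
    have hI := Complex.I_ne_zero
    field_simp
    rw [Complex.I_sq]; ring
  simp only [Function.comp, Pi.smul_apply, Pi.mul_apply, smul_eq_mul] at h
  rw [e, eta_eq_PhiI, eta_eq_PhiI, ← mul_assoc, csqrt_I_mul hre] at h
  rw [h]; ring

noncomputable def RR (z : ℂ) : ℂ :=
  PhiI (Complex.exp (-(π ^ 2 / z)) ^ 2) /
    (PhiI (Complex.exp (-(π ^ 2 / z)) ^ 4) * PhiI (Complex.exp (-(π ^ 2 / z))))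

lemma exp_neg_norm_lt {z : ℂ} (hz : 0 < z.re) : ‖Complex.exp (-z)‖ < 1 := by
  rw [Complex.norm_exp, Real.exp_lt_one_iff]; simpa using hz

lemma PA_modular {z : ℂ} (hz : 0 < z.re) :
    PA (Complex.exp (-z)) = Complex.sqrt (z / π) *
      Complex.exp (-z / 8) * Complex.exp (π ^ 2 / (8 * z)) * RR z := by
  have hpi : (π : ℂ) ≠ 0 := by exact_mod_cast Real.pi_ne_zero
  have hz0 : z ≠ 0 := by rintro rfl; simp at hz
  have h1 := PhiI_modular hz
  have h2 := PhiI_modular (w := 2 * z) (by simpa using hz)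
  have h4 := PhiI_modular (w := 4 * z) (by simpa using hz)
  have hv : z / (2 * π) ≠ 0 := div_ne_zero hz0 (by simp [Real.pi_ne_zero])
  set s := Complex.sqrt (z / (2 * π)) with hs
  have hs0 : s ≠ 0 := csqrt_ne hv
  have e2 : Complex.sqrt (2 * z / (2 * π)) = (Real.sqrt 2 : ℂ) * s := by
    rw [hs, ← csqrt_ofReal_mul (by norm_num) hv]; congr 1; push_cast; ring
  have e4 : Complex.sqrt (4 * z / (2 * π)) = 2 * s := by
    have h := csqrt_ofReal_mul (c := 4) (by norm_num) hv
    have h4' : Real.sqrt 4 = 2 := by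
      rw [show (4 : ℝ) = 2 ^ 2 by norm_num, Real.sqrt_sq (by norm_num)]
    rw [h4'] at h; push_cast at h; rw [hs, ← h]; congr 1; ring
  have e5 : Complex.sqrt (z / π) = (Real.sqrt 2 : ℂ) * s := by
    rw [← e2]; congr 1; field_simp
  have hsq2 : (Real.sqrt 2 : ℂ) ^ 2 = 2 := by
    rw [← Complex.ofReal_pow, Real.sq_sqrt (by norm_num)]; norm_num
  have hsq0 : (Real.sqrt 2 : ℂ) ≠ 0 := by
    intro h; rw [h] at hsq2; norm_num at hsq2
  rw [e2] at h2
  rw [e4] at h4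
  rw [e5]
  have p2 : Complex.exp (-z) ^ 2 = Complex.exp (-(2 * z)) := by
    rw [← Complex.exp_nat_mul]; congr 1; push_cast; ring
  have p4 : Complex.exp (-z) ^ 4 = Complex.exp (-(4 * z)) := by
    rw [← Complex.exp_nat_mul]; congr 1; push_cast; ring
  have q2 : Complex.exp (-(π ^ 2 / z)) ^ 2 = Complex.exp (-(4 * π ^ 2 / (2 * z))) := by
    rw [← Complex.exp_nat_mul]; congr 1; push_cast; field_simp; norm_num
  have q4 : Complex.exp (-(π ^ 2 / z)) ^ 4 = Complex.exp (-(4 * π ^ 2 / z)) := by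
    rw [← Complex.exp_nat_mul]; congr 1; push_cast; field_simp
  have q1 : Complex.exp (-(π ^ 2 / z)) = Complex.exp (-(4 * π ^ 2 / (4 * z))) := by
    congr 1; field_simp
  have n1 : PhiI (Complex.exp (-z)) ≠ 0 := PhiI_ne (exp_neg_norm_lt hz)
  have n4 : PhiI (Complex.exp (-(4 * z))) ≠ 0 := PhiI_ne (exp_neg_norm_lt (by simpa using hz))
  have m4 : PhiI (Complex.exp (-(4 * π ^ 2 / z))) ≠ 0 := by
    intro h; rw [h, mul_zero] at h1
    exact mul_ne_zero n1 (mul_ne_zero hs0 (Complex.exp_ne_zero _)) h1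
  have m1 : PhiI (Complex.exp (-(4 * π ^ 2 / (4 * z)))) ≠ 0 := by
    intro h; rw [h, mul_zero] at h4
    exact mul_ne_zero n4 (mul_ne_zero (mul_ne_zero two_ne_zero hs0) (Complex.exp_ne_zero _)) h4
  rw [PA, RR, p2, p4, q2, q4, q1]
  -- exponentials
  set a := Complex.exp (-z / 24) with ha
  set b := Complex.exp (π ^ 2 / (24 * z)) with hb
  have a0 : a ≠ 0 := Complex.exp_ne_zero _
  have b0 : b ≠ 0 := Complex.exp_ne_zero _
  have ea2 : Complex.exp (-(2 * z) / 24) = a ^ 2 := by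
    rw [ha, ← Complex.exp_nat_mul]; congr 1; push_cast; ring
  have ea4 : Complex.exp (-(4 * z) / 24) = a ^ 4 := by
    rw [ha, ← Complex.exp_nat_mul]; congr 1; push_cast; ring
  have ea3 : Complex.exp (-z / 8) = a ^ 3 := by
    rw [ha, ← Complex.exp_nat_mul]; congr 1; push_cast; ring
  have eb3 : Complex.exp (π ^ 2 / (8 * z)) = b ^ 3 := by
    rw [hb, ← Complex.exp_nat_mul]; congr 1; push_cast; field_simp; norm_num
  have eb4 : Complex.exp (-(4 * π ^ 2 / z) / 24) = (b ^ 4)⁻¹ := by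
    rw [hb, ← Complex.exp_nat_mul, ← Complex.exp_neg]; congr 1; push_cast; field_simp
  have eb2 : Complex.exp (-(4 * π ^ 2 / (2 * z)) / 24) = (b ^ 2)⁻¹ := by
    rw [hb, ← Complex.exp_nat_mul, ← Complex.exp_neg]; congr 1; push_cast; field_simp; norm_num
  have eb1 : Complex.exp (-(4 * π ^ 2 / (4 * z)) / 24) = b⁻¹ := by
    rw [hb, ← Complex.exp_neg]; congr 1; field_simp
  rw [eb4] at h1
  rw [ea2, eb2] at h2
  rw [ea4, eb1] at h4
  rw [ea3, eb3]
  generalize PhiI (Complex.exp (-z)) = A at *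
  generalize PhiI (Complex.exp (-(2 * z))) = B at *
  generalize PhiI (Complex.exp (-(4 * z))) = C at *
  generalize PhiI (Complex.exp (-(4 * π ^ 2 / z))) = A' at *
  generalize PhiI (Complex.exp (-(4 * π ^ 2 / (2 * z)))) = B' at *
  generalize PhiI (Complex.exp (-(4 * π ^ 2 / (4 * z)))) = C' at *
  generalize (Real.sqrt 2 : ℂ) = t at *
  have hA : A' = b ^ 4 * (A * (s * a)) := by rw [h1]; field_simp
  have hB : B' = b ^ 2 * (B * (t * s * a ^ 2)) := by rw [h2]; field_simp
  have hC : C' = b * (C * (2 * s * a ^ 4)) := by rw [h4]; field_simp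
  rw [hA, hB, hC]
  field_simp
  rw [hsq2]

/-! ### Major arc estimate -/

lemma PhiI_sub_one_le {w : ℂ} (hw : ‖w‖ ≤ 1 / 2) : ‖PhiI w - 1‖ ≤ 4 * ‖w‖ := by
  have hw1 : ‖w‖ < 1 := by linarith
  have ht := (PhiF_tendsto hw1).sub_const 1
  refine le_of_tendsto ht.norm (Filter.Eventually.of_forall fun M => ?_)
  have h1 := Finset.norm_prod_one_add_sub_one_le (Finset.range M) (fun n => -w ^ (n + 1))
  have h2 : ∑ i ∈ Finset.range M, ‖-w ^ (i + 1)‖ ≤ 2 * ‖w‖ := by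
    have hs := summable_geometric_of_lt_one (norm_nonneg w) hw1
    have h3 : ∑ i ∈ Finset.range M, ‖w‖ ^ i ≤ 2 := by
      refine (hs.sum_le_tsum _ (fun i _ => by positivity)).trans ?_
      rw [tsum_geometric_of_lt_one (norm_nonneg w) hw1]
      rw [inv_le_comm₀ (by linarith) (by norm_num)]
      linarith
    calc ∑ i ∈ Finset.range M, ‖-w ^ (i + 1)‖ = (∑ i ∈ Finset.range M, ‖w‖ ^ i) * ‖w‖ := by
          rw [Finset.sum_mul]; refine Finset.sum_congr rfl fun i _ => ?_
          rw [norm_neg, norm_pow, pow_succ]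
      _ ≤ 2 * ‖w‖ := by gcongr
  have h4 : Real.exp (2 * ‖w‖) - 1 ≤ 4 * ‖w‖ := by
    have := Real.abs_exp_sub_one_le (x := 2 * ‖w‖) (by rw [abs_of_nonneg (by positivity)]; linarith)
    rw [abs_of_nonneg (by positivity : 0 ≤ 2 * ‖w‖)] at this
    linarith [le_abs_self (Real.exp (2 * ‖w‖) - 1)]
  have h5 : PhiF M w = ∏ i ∈ Finset.range M, (1 + -w ^ (i + 1)) := by
    rw [PhiF]; simp only [sub_eq_add_neg]
  rw [h5]
  exact h1.trans ((sub_le_sub_right (Real.exp_le_exp.mpr h2) 1).trans h4)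

lemma mul_sub_one_le {a b : ℂ} {c1 c2 d : ℝ} (hd : d ≤ 2) (hd0 : 0 ≤ d) (h1 : 0 ≤ c1)
    (h2 : 0 ≤ c2) (ha : ‖a - 1‖ ≤ c1 * d) (hb : ‖b - 1‖ ≤ c2 * d) :
    ‖a * b - 1‖ ≤ (c1 + c2 + 2 * c1 * c2) * d := by
  have e : a * b - 1 = (a - 1) + (b - 1) + (a - 1) * (b - 1) := by ring
  rw [e]
  have h3 : ‖(a - 1) * (b - 1)‖ ≤ (c1 * d) * (c2 * d) := by
    rw [norm_mul]; gcongr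
  have h4 : (c1 * d) * (c2 * d) ≤ 2 * c1 * c2 * d := by
    have : 0 ≤ c1 * c2 * d := by positivity
    nlinarith
  calc _ ≤ ‖a - 1‖ + ‖b - 1‖ + ‖(a - 1) * (b - 1)‖ := norm_add₃_le
    _ ≤ _ := by nlinarith

/-- The point on the integration line. -/
noncomputable def zz (x u : ℝ) : ℂ := (x : ℂ) * (1 + u * Complex.I)

lemma zz_re (x u : ℝ) : (zz x u).re = x := by simp [zz]

lemma zz_norm_le {x u : ℝ} (hx : 0 < x) (hu : |u| ≤ 1) : ‖zz x u‖ ≤ 2 * x := by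
  rw [zz, norm_mul, Complex.norm_real, Real.norm_of_nonneg hx.le, mul_comm]
  gcongr
  refine (norm_add_le _ _).trans ?_
  simp; linarith

lemma zz_inv_re {x u : ℝ} (hx : 0 < x) : ((zz x u)⁻¹).re = 1 / (x * (1 + u ^ 2)) := by
  rw [Complex.inv_re, zz_re]
  have : Complex.normSq (zz x u) = x ^ 2 * (1 + u ^ 2) := by
    simp [zz, Complex.normSq_apply]; ring
  rw [this]; field_simp

lemma RR_sub_one_le {x u : ℝ} (hx : 0 < x) (hx4 : x ≤ 1 / 4) (hu : |u| ≤ 1) :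
    ‖RR (zz x u) - 1‖ ≤ 4 * x := by
  set e := Complex.exp (-(π ^ 2 / zz x u)) with he
  have hu2 : u ^ 2 ≤ 1 := by rw [sq_le_one_iff_abs_le_one]; exact hu
  have hre : (-(π ^ 2 / zz x u) : ℂ).re ≤ -(4 / x) := by
    have : (-(π ^ 2 / zz x u) : ℂ) = ((-π ^ 2 : ℝ) : ℂ) * (zz x u)⁻¹ := by
      push_cast; ring
    rw [this, Complex.re_ofReal_mul, zz_inv_re hx, neg_mul, neg_le_neg_iff]
    rw [mul_one_div, div_le_div_iff₀ hx (by positivity)]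
    have h9 : 9 ≤ π ^ 2 := by nlinarith [Real.pi_gt_three]
    have : 4 * (1 + u ^ 2) ≤ π ^ 2 := by linarith
    nlinarith
  have hr : ‖e‖ ≤ x / 4 := by
    rw [he, Complex.norm_exp]
    refine (Real.exp_le_exp.mpr hre).trans ?_
    rw [Real.exp_neg, inv_le_comm₀ (Real.exp_pos _) (by positivity), inv_div]
    linarith [Real.add_one_le_exp (4 / x)]
  set r := ‖e‖ with hrr
  have hr0 : 0 ≤ r := norm_nonneg _
  have hr16 : r ≤ 1 / 16 := by linarith
  have h1 : ‖PhiI e - 1‖ ≤ 4 * r := PhiI_sub_one_le (by linarith)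
  have h2 : ‖PhiI (e ^ 2) - 1‖ ≤ r := by
    refine (PhiI_sub_one_le (by rw [norm_pow, ← hrr]; nlinarith)).trans ?_
    rw [norm_pow, ← hrr]; nlinarith
  have h4 : ‖PhiI (e ^ 4) - 1‖ ≤ r := by
    have : r ^ 4 ≤ r ^ 2 := pow_le_pow_of_le_one hr0 (by linarith) (by norm_num)
    refine (PhiI_sub_one_le (by rw [norm_pow, ← hrr]; nlinarith)).trans ?_
    rw [norm_pow, ← hrr]; nlinarith
  rw [RR, ← he]
  generalize PhiI e = c at *
  generalize PhiI (e ^ 2) = a at *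
  generalize PhiI (e ^ 4) = b at *
  have hbc : ‖b * c - 1‖ ≤ 6 * r := by
    have e1 : b * c - 1 = (b - 1) + (c - 1) + (b - 1) * (c - 1) := by ring
    rw [e1]
    have h3 : ‖(b - 1) * (c - 1)‖ ≤ r * (4 * r) := by
      rw [norm_mul]; gcongr
    calc _ ≤ ‖b - 1‖ + ‖c - 1‖ + ‖(b - 1) * (c - 1)‖ := norm_add₃_le
      _ ≤ _ := by nlinarith
  have hbc2 : 1 / 2 ≤ ‖b * c‖ := by
    have := norm_sub_norm_le (1 : ℂ) (1 - b * c)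
    rw [sub_sub_cancel, norm_one, norm_sub_rev] at this
    linarith
  have hbc0 : b * c ≠ 0 := by
    intro h; rw [h, norm_zero] at hbc2; linarith
  have e2 : a / (b * c) - 1 = ((a - 1) - (b * c - 1)) / (b * c) := by
    rw [sub_sub_sub_cancel_right, sub_div, div_self hbc0]
  rw [e2, norm_div, div_le_iff₀ (by linarith)]
  calc _ ≤ ‖a - 1‖ + ‖b * c - 1‖ := norm_sub_le _ _
    _ ≤ 4 * x * (1 / 2) := by linarith
    _ ≤ _ := by gcongr

lemma csqrt_zz {x u : ℝ} (hx : 0 < x) : Complex.sqrt (zz x u / π) =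
    (Real.sqrt (x / π) : ℂ) * Complex.sqrt (1 + u * Complex.I) := by
  have hv : (1 + u * Complex.I : ℂ) ≠ 0 := by
    intro h; have := congrArg Complex.re h; simp at this
  rw [← csqrt_ofReal_mul (by have := Real.pi_pos; positivity) hv]
  congr 1; rw [zz]; push_cast; ring

lemma norm_exp_zz {x u : ℝ} (hx : 0 < x) (hx4 : x ≤ 1 / 4) (hu : |u| ≤ 1) :
    ‖Complex.exp (-zz x u / 8) - 1‖ ≤ x := by
  have hz := zz_norm_le hx hu
  have h8 : ‖-zz x u / 8‖ ≤ x / 4 := by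
    rw [norm_div, norm_neg]; norm_num; linarith
  refine (Complex.norm_exp_sub_one_le (by linarith)).trans ?_
  linarith

lemma PA_major {x u : ℝ} (hx : 0 < x) (hx4 : x ≤ 1 / 4) (hu : |u| ≤ 1) :
    ‖PA (Complex.exp (-zz x u)) * (1 - Complex.exp (-zz x u)) -
      (Real.sqrt (x / π) * x : ℝ) * Complex.exp (π ^ 2 / (8 * zz x u))‖ ≤
    400 * (|u| + x) * (Real.sqrt (x / π) * x * ‖Complex.exp (π ^ 2 / (8 * zz x u))‖) := by
  have hz := zz_norm_le hx hu
  have hx0 : (x : ℂ) ≠ 0 := by exact_mod_cast hx.ne'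
  have hd : |u| + x ≤ 2 := by linarith
  have hd0 : 0 ≤ |u| + x := by positivity
  have f1 : ‖Complex.sqrt (1 + u * Complex.I) - 1‖ ≤ 1 * (|u| + x) :=
    (csqrt_sub_one_le u).trans (by linarith)
  have f2 : ‖Complex.exp (-zz x u / 8) - 1‖ ≤ 1 * (|u| + x) :=
    (norm_exp_zz hx hx4 hu).trans (by linarith [abs_nonneg u])
  have f3 : ‖RR (zz x u) - 1‖ ≤ 4 * (|u| + x) :=
    (RR_sub_one_le hx hx4 hu).trans (by linarith [abs_nonneg u])
  have f4 : ‖(1 - Complex.exp (-zz x u)) / x - 1‖ ≤ 4 * (|u| + x) := by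
    have e : (1 - Complex.exp (-zz x u)) / x - 1 =
        -(Complex.exp (-zz x u) - 1 - -zz x u) / x + u * Complex.I := by
      field_simp
      rw [zz]; ring
    rw [e]
    refine (norm_add_le _ _).trans ?_
    have h1 : ‖-(Complex.exp (-zz x u) - 1 - -zz x u) / (x : ℂ)‖ ≤ 4 * x := by
      rw [norm_div, norm_neg, Complex.norm_real, Real.norm_of_nonneg hx.le, div_le_iff₀ hx]
      refine (Complex.norm_exp_sub_one_sub_id_le (by rw [norm_neg]; linarith)).trans ?_
      rw [norm_neg]
      calc ‖zz x u‖ ^ 2 ≤ (2 * x) ^ 2 := by gcongr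
        _ = _ := by ring
    have h2 : ‖(u : ℂ) * Complex.I‖ = |u| := by simp
    rw [h2]; linarith [abs_nonneg u]
  have g1 := mul_sub_one_le hd hd0 (by norm_num) (by norm_num) f1 f2
  have g2 := mul_sub_one_le hd hd0 (by norm_num) (by norm_num) f3 f4
  have g3 := mul_sub_one_le hd hd0 (by norm_num) (by norm_num) g1 g2
  rw [PA_modular (by rw [zz_re]; exact hx), csqrt_zz hx]
  generalize Complex.sqrt (1 + u * Complex.I) = s at *
  generalize Complex.exp (-zz x u / 8) = t at *
  generalize RR (zz x u) = R at *
  generalize Complex.exp (-zz x u) = q at *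
  generalize Complex.exp (π ^ 2 / (8 * zz x u)) = E at *
  have e : (Real.sqrt (x / π) : ℂ) * s * t * E * R * (1 - q) -
      (Real.sqrt (x / π) * x : ℝ) * E =
      ((Real.sqrt (x / π) * x : ℝ) * E) * (s * t * (R * ((1 - q) / x)) - 1) := by
    push_cast; field_simp
  rw [e, norm_mul, norm_mul, Complex.norm_real,
    Real.norm_of_nonneg (by positivity), mul_comm]
  gcongr
  refine g3.trans ?_
  gcongr; norm_num

lemma PA_real_bound {x : ℝ} (hx : 0 < x) (hx4 : x ≤ 1 / 4) :
    ‖PA ((Real.exp (-x) : ℝ) : ℂ)‖ ≤ 4 * Real.sqrt x * Real.exp (π ^ 2 / (8 * x)) := by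
  have hz : zz x 0 = x := by simp [zz]
  have h1 := RR_sub_one_le (u := 0) hx hx4 (by simp)
  have h2 := norm_exp_zz (u := 0) hx hx4 (by simp)
  have h3 := PA_modular (z := zz x 0) (by rw [zz_re]; exact hx)
  rw [csqrt_zz hx] at h3
  rw [hz] at h1 h2 h3
  have e0 : ((Real.exp (-x) : ℝ) : ℂ) = Complex.exp (-(x : ℂ)) := by push_cast; rfl
  have n1 : ‖RR (x : ℂ)‖ ≤ 2 := by
    have := norm_sub_norm_le (RR (x : ℂ)) 1
    rw [norm_one] at this; linarith
  have n2 : ‖Complex.exp (-(x : ℂ) / 8)‖ ≤ 2 := by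
    have := norm_sub_norm_le (Complex.exp (-(x : ℂ) / 8)) 1
    rw [norm_one] at this; linarith
  have n3 : ‖Complex.exp ((π : ℂ) ^ 2 / (8 * (x : ℂ)))‖ = Real.exp (π ^ 2 / (8 * x)) := by
    rw [← Complex.norm_of_nonneg (Real.exp_pos (π ^ 2 / (8 * x))).le]; push_cast; rfl
  have n4 : Real.sqrt (x / π) ≤ Real.sqrt x := by
    apply Real.sqrt_le_sqrt
    exact div_le_self hx.le (by linarith [Real.pi_gt_three])
  have n5 : Complex.sqrt (1 + ((0 : ℝ) : ℂ) * Complex.I) = 1 := by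
    have := csqrt_sub_one_le 0
    rw [abs_zero, norm_le_zero_iff, sub_eq_zero] at this
    exact this
  rw [e0, h3, n5, mul_one, norm_mul, norm_mul, norm_mul, n3, Complex.norm_real,
    Real.norm_of_nonneg (Real.sqrt_nonneg _)]
  calc _ ≤ Real.sqrt x * 2 * Real.exp (π ^ 2 / (8 * x)) * 2 := by gcongr
    _ = _ := by ring

/-! ### Cauchy's formula -/

/-- The vertical integration line. -/
noncomputable def zl (x y : ℝ) : ℂ := (x : ℂ) + y * Complex.I

lemma zl_re (x y : ℝ) : (zl x y).re = x := by simp [zl]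

lemma norm_exp_neg_zl (x y : ℝ) : ‖Complex.exp (-zl x y)‖ = Real.exp (-x) := by
  rw [Complex.norm_exp]; simp [zl]

lemma norm_exp_neg_zl_lt {x : ℝ} (hx : 0 < x) (y : ℝ) : ‖Complex.exp (-zl x y)‖ < 1 := by
  rw [norm_exp_neg_zl, Real.exp_lt_one_iff]; linarith

lemma continuous_zl (x : ℝ) : Continuous (zl x) := by
  unfold zl; fun_prop

lemma summable_pod_exp {x : ℝ} (hx : 0 < x) :
    Summable fun m : ℕ => (podCount m : ℝ) * Real.exp (-x) ^ m := by
  have := summable_pod (norm_exp_neg_zl_lt hx 0)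
  simpa only [norm_mul, norm_pow, norm_exp_neg_zl, Complex.norm_natCast] using this

lemma continuous_PA {x : ℝ} (hx : 0 < x) : Continuous fun y => PA (Complex.exp (-zl x y)) := by
  have : (fun y => PA (Complex.exp (-zl x y))) =
      fun y => ∑' m : ℕ, (podCount m : ℂ) * Complex.exp (-zl x y) ^ m := by
    funext y; rw [tsum_pod (norm_exp_neg_zl_lt hx y)]
  rw [this]
  refine continuous_tsum (fun m => ?_) (summable_pod_exp hx) (fun m y => ?_)
  · have := continuous_zl x; fun_prop
  · rw [norm_mul, norm_pow, norm_exp_neg_zl, Complex.norm_natCast]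

lemma integral_exp_int (k : ℤ) :
    ∫ y in (-π)..π, Complex.exp ((k : ℂ) * Complex.I * (y : ℂ)) = if k = 0 then 2 * (π : ℂ) else 0 := by
  split_ifs with h
  · subst h
    simp; ring
  · have hc : (k : ℂ) * Complex.I ≠ 0 := mul_ne_zero (by exact_mod_cast h) Complex.I_ne_zero
    rw [integral_exp_mul_complex hc]
    have : Complex.exp ((k : ℂ) * Complex.I * (π : ℂ)) =
        Complex.exp ((k : ℂ) * Complex.I * ((-π : ℝ) : ℂ)) := by
      rw [Complex.exp_eq_exp_iff_exists_int]
      exact ⟨k, by push_cast; ring⟩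
    rw [this, sub_self, zero_div]

lemma cauchy_pod {x : ℝ} (hx : 0 < x) (n : ℕ) :
    ∫ y in (-π)..π, Complex.exp (n * zl x y) * PA (Complex.exp (-zl x y)) =
      2 * π * (podCount n : ℂ) := by
  set F : ℕ → ℝ → ℂ := fun m y =>
    Complex.exp (n * zl x y) * ((podCount m : ℂ) * Complex.exp (-zl x y) ^ m) with hF
  have hcz := continuous_zl x
  have h := intervalIntegral.hasSum_integral_of_dominated_convergence (a := -π) (b := π)
    (μ := MeasureTheory.volume) (F := F)
    (f := fun y => Complex.exp (n * zl x y) * PA (Complex.exp (-zl x y)))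
    (fun m _ => Real.exp (n * x) * ((podCount m : ℝ) * Real.exp (-x) ^ m))
    (fun m => by
      apply Continuous.aestronglyMeasurable
      simp only [hF]; fun_prop)
    (fun m => Filter.Eventually.of_forall fun y _ => by
      simp only [hF]
      rw [norm_mul, norm_mul, norm_pow, norm_exp_neg_zl, Complex.norm_natCast, Complex.norm_exp]
      simp [zl])
    (Filter.Eventually.of_forall fun y _ => (summable_pod_exp hx).mul_left _)
    (by simp)
    (Filter.Eventually.of_forall fun y _ => by
      simp only [hF]
      apply HasSum.mul_left
      rw [← tsum_pod (norm_exp_neg_zl_lt hx y)]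
      exact (summable_pod (norm_exp_neg_zl_lt hx y)).of_norm.hasSum)
  have h2 : ∀ m, ∫ y in (-π)..π, F m y = if m = n then 2 * π * (podCount n : ℂ) else 0 := by
    intro m
    have e : ∀ y, F m y = ((podCount m : ℂ) * Complex.exp (((n : ℂ) - m) * x)) *
        Complex.exp (((n - m : ℤ) : ℂ) * Complex.I * (y : ℂ)) := by
      intro y
      simp only [hF]
      rw [← Complex.exp_nat_mul, mul_left_comm, ← Complex.exp_add, mul_assoc, ← Complex.exp_add]
      congr 2
      rw [zl]; push_cast; ring
    simp_rw [e]
    rw [intervalIntegral.integral_const_mul, integral_exp_int]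
    by_cases hm : m = n
    · subst hm; simp; ring
    · have : (n : ℤ) - m ≠ 0 := by omega
      simp [this, hm]
  simp_rw [h2] at h
  have h3 := h.tsum_eq
  rw [tsum_ite_eq] at h3
  exact h3.symm

/-- The integrand for the first difference. -/
noncomputable def GG (n : ℕ) (x y : ℝ) : ℂ :=
  Complex.exp (n * zl x y) * (PA (Complex.exp (-zl x y)) * (1 - Complex.exp (-zl x y)))

lemma continuous_GG {x : ℝ} (hx : 0 < x) (n : ℕ) : Continuous (GG n x) := by
  have h1 := continuous_PA hx
  have h2 := continuous_zl x
  unfold GG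
  fun_prop

lemma cauchy_diff {x : ℝ} (hx : 0 < x) {n : ℕ} (hn : 1 ≤ n) :
    ∫ y in (-π)..π, GG n x y = 2 * π * ((podCount n : ℂ) - podCount (n - 1)) := by
  have h1 := continuous_PA hx
  have h2 := continuous_zl x
  rw [mul_sub, ← cauchy_pod hx n, ← cauchy_pod hx (n - 1), ← intervalIntegral.integral_sub]
  · refine intervalIntegral.integral_congr fun y _ => ?_
    simp only [GG]
    have : Complex.exp (((n - 1 : ℕ) : ℂ) * zl x y) =
        Complex.exp (n * zl x y) * Complex.exp (-zl x y) := by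
      rw [← Complex.exp_add]; congr 1; push_cast [hn]; ring
    rw [this]; ring
  · apply Continuous.intervalIntegrable; fun_prop
  · apply Continuous.intervalIntegrable; fun_prop

/-! ### Gaussian estimates -/

lemma gauss_s (s : ℝ) : |s| ≤ 4 * Real.exp (s ^ 2 / 16) := by
  have := Real.add_one_le_exp (s ^ 2 / 16)
  have h2 : s ^ 2 = |s| ^ 2 := (sq_abs s).symm
  nlinarith [sq_nonneg (|s| - 4)]

lemma exp_diff_bound {l u : ℝ} (hl : 0 ≤ l) (hu : |u| ≤ 1) :
    ‖Complex.exp (-(l * u ^ 2 : ℝ) / (1 + u * Complex.I)) - (Real.exp (-l * u ^ 2) : ℝ)‖ ≤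
      Real.exp (-(l * u ^ 2) / 2) * (l * |u| ^ 3) := by
  have hu2 : u ^ 2 ≤ 1 := by rw [sq_le_one_iff_abs_le_one]; exact hu
  have hv : (1 + u * Complex.I : ℂ) ≠ 0 := by
    intro h; have := congrArg Complex.re h; simp at this
  set S : Set ℂ := {w | w.re ≤ -(l * u ^ 2) / 2} with hS
  have hconv : Convex ℝ S := convex_halfSpace_re_le _
  set a : ℂ := -(l * u ^ 2 : ℝ) / (1 + u * Complex.I) with ha
  set b : ℂ := ((-l * u ^ 2 : ℝ) : ℂ) with hb
  have hn : 0 ≤ l * u ^ 2 := by positivity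
  have haS : a ∈ S := by
    have : a.re = -(l * u ^ 2) / (1 + u ^ 2) := by
      rw [ha, div_eq_mul_inv, ← Complex.ofReal_neg, Complex.re_ofReal_mul, Complex.inv_re]
      have : Complex.normSq (1 + u * Complex.I) = 1 + u ^ 2 := by
        simp [Complex.normSq_apply]; ring
      rw [this]; simp; ring
    simp only [hS, Set.mem_setOf_eq, this]
    rw [neg_div, neg_div, neg_le_neg_iff]
    gcongr; linarith
  have hbS : b ∈ S := by
    simp only [hS, Set.mem_setOf_eq, hb, Complex.ofReal_re]; linarith
  have h := hconv.norm_image_sub_le_of_norm_deriv_le (f := Complex.exp)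
    (C := Real.exp (-(l * u ^ 2) / 2)) (fun w _ => Complex.differentiableAt_exp)
    (fun w hw => by
      rw [Complex.deriv_exp, Complex.norm_exp]
      exact Real.exp_le_exp.mpr hw) hbS haS
  rw [Complex.ofReal_exp]
  refine h.trans ?_
  gcongr
  have e : a - b = ((l * u ^ 2 * u : ℝ) : ℂ) * Complex.I / (1 + u * Complex.I) := by
    rw [ha, hb]; push_cast; field_simp; ring
  rw [e, norm_div, norm_mul, Complex.norm_real, Complex.norm_I, mul_one, Real.norm_eq_abs,
    abs_mul, abs_of_nonneg hn]
  have h1 : 1 ≤ ‖(1 + u * Complex.I : ℂ)‖ := by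
    refine le_trans ?_ (Complex.re_le_norm _); simp
  have h3 : l * u ^ 2 * |u| = l * |u| ^ 3 := by rw [← sq_abs]; ring
  rw [h3]
  exact div_le_self (by positivity) h1

lemma gauss_interval_le {b : ℝ} (hb : 0 < b) :
    ∫ u in (-1 : ℝ)..1, Real.exp (-b * u ^ 2) ≤ Real.sqrt (π / b) := by
  rw [intervalIntegral.integral_of_le (by norm_num), ← integral_gaussian b]
  exact MeasureTheory.setIntegral_le_integral (integrable_exp_neg_mul_sq hb)
    (Filter.Eventually.of_forall fun u => (Real.exp_pos _).le)

lemma gauss_u {l : ℝ} (hl : 0 < l) (u : ℝ) :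
    |u| ≤ 4 / Real.sqrt l * Real.exp (l * u ^ 2 / 16) := by
  have h := gauss_s (Real.sqrt l * u)
  rw [abs_mul, abs_of_nonneg (Real.sqrt_nonneg _), mul_pow, Real.sq_sqrt hl.le] at h
  have hs := Real.sqrt_pos.mpr hl
  rw [div_mul_eq_mul_div, le_div_iff₀ hs]; linarith

lemma sqrt_four_pi_div {l : ℝ} (hl : 0 < l) :
    1 / Real.sqrt l * Real.sqrt (π / (l / 4)) ≤ 4 / l := by
  have h1 : π / (l / 4) ≤ 16 / l := by
    rw [div_le_div_iff₀ (by positivity) hl]; nlinarith [Real.pi_lt_four]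
  have h2 : Real.sqrt (π / (l / 4)) ≤ 4 / Real.sqrt l := by
    refine (Real.sqrt_le_sqrt h1).trans ?_
    rw [Real.sqrt_div (by norm_num), show (16 : ℝ) = 4 ^ 2 by norm_num,
      Real.sqrt_sq (by norm_num)]
  calc _ ≤ 1 / Real.sqrt l * (4 / Real.sqrt l) := by gcongr
    _ = 4 / (Real.sqrt l * Real.sqrt l) := by field_simp
    _ = _ := by rw [Real.mul_self_sqrt hl.le]

lemma gauss_main {l : ℝ} (hl : 0 < l) :
    |(∫ u in (-1 : ℝ)..1, Real.exp (-l * u ^ 2)) - Real.sqrt (π / l)| ≤ 16 / l := by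
  have hi := integrable_exp_neg_mul_sq hl
  have hi4 := (integrable_exp_neg_mul_sq (b := l / 4) (by positivity)).const_mul
    (4 / Real.sqrt l)
  have h := MeasureTheory.integral_add_compl (measurableSet_Ioc (a := (-1 : ℝ)) (b := 1)) hi
  rw [intervalIntegral.integral_of_le (by norm_num), ← integral_gaussian l, ← h]
  rw [sub_add_cancel_left, abs_neg, abs_of_nonneg (MeasureTheory.integral_nonneg
    fun u => (Real.exp_pos _).le)]
  have h2 : ∫ u in (Set.Ioc (-1 : ℝ) 1)ᶜ, Real.exp (-l * u ^ 2) ≤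
      ∫ u in (Set.Ioc (-1 : ℝ) 1)ᶜ, 4 / Real.sqrt l * Real.exp (-(l / 4) * u ^ 2) := by
    refine MeasureTheory.setIntegral_mono_on hi.integrableOn hi4.integrableOn
      measurableSet_Ioc.compl fun u hu => ?_
    have hu1 : 1 ≤ |u| := by
      by_contra hc
      have := abs_lt.mp (not_le.mp hc)
      exact hu ⟨this.1, this.2.le⟩
    have h3 := gauss_u hl u
    have hpos := Real.exp_pos (-l * u ^ 2)
    have hsq := Real.sqrt_pos.mpr hl
    calc Real.exp (-l * u ^ 2) ≤ |u| * Real.exp (-l * u ^ 2) := by nlinarith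
      _ ≤ 4 / Real.sqrt l * Real.exp (l * u ^ 2 / 16) * Real.exp (-l * u ^ 2) := by gcongr
      _ = 4 / Real.sqrt l * Real.exp (l * u ^ 2 / 16 + -l * u ^ 2) := by
          rw [mul_assoc, ← Real.exp_add]
      _ ≤ _ := by
          gcongr
          nlinarith [mul_nonneg hl.le (sq_nonneg u)]
  have h3 : ∫ u in (Set.Ioc (-1 : ℝ) 1)ᶜ, 4 / Real.sqrt l * Real.exp (-(l / 4) * u ^ 2) ≤
      4 / Real.sqrt l * Real.sqrt (π / (l / 4)) := by
    rw [← integral_gaussian (l / 4), ← MeasureTheory.integral_const_mul]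
    exact MeasureTheory.setIntegral_le_integral hi4
      (Filter.Eventually.of_forall fun u => by positivity)
  have h4 := sqrt_four_pi_div hl
  calc _ ≤ _ := h2
    _ ≤ _ := h3
    _ = 4 * (1 / Real.sqrt l * Real.sqrt (π / (l / 4))) := by ring
    _ ≤ 4 * (4 / l) := by gcongr
    _ = _ := by ring

lemma gauss_err {l x u : ℝ} (hl : 0 < l) (hx : x ≤ 1 / Real.sqrt l) :
    Real.exp (-(l * u ^ 2) / 2) * (l * |u| ^ 3) +
      400 * (|u| + x) * Real.exp (-(l * u ^ 2) / 2) ≤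
      2100 / Real.sqrt l * Real.exp (-(l / 4) * u ^ 2) := by
  have hs := Real.sqrt_pos.mpr hl
  have hln : 0 ≤ l * u ^ 2 := by positivity
  have h1 := gauss_u hl u
  set E := Real.exp (l * u ^ 2 / 16) with hE
  have hE1 : 1 ≤ E := Real.one_le_exp (by positivity)
  have h3 : l * |u| ^ 3 ≤ 64 / Real.sqrt l * E ^ 3 := by
    have : |u| ^ 3 ≤ (4 / Real.sqrt l * E) ^ 3 := by gcongr
    calc l * |u| ^ 3 ≤ l * (4 / Real.sqrt l * E) ^ 3 := by gcongr
      _ = (Real.sqrt l) ^ 2 * (4 / Real.sqrt l * E) ^ 3 := by rw [Real.sq_sqrt hl.le]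
      _ = _ := by field_simp; norm_num
  have hEE : E ≤ E ^ 3 := le_self_pow₀ hE1 (by norm_num)
  have hE13 : 1 ≤ E ^ 3 := one_le_pow₀ hE1
  have h4 : |u| ≤ 4 / Real.sqrt l * E ^ 3 := h1.trans (by gcongr)
  have h5 : x ≤ 1 / Real.sqrt l * E ^ 3 := hx.trans (le_mul_of_one_le_right (by positivity) hE13)
  have h6 : l * |u| ^ 3 + 400 * (|u| + x) ≤ 2100 / Real.sqrt l * E ^ 3 := by
    have e : 2100 / Real.sqrt l * E ^ 3 = 64 / Real.sqrt l * E ^ 3 +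
      400 * (4 / Real.sqrt l * E ^ 3 + 1 / Real.sqrt l * E ^ 3) + 36 * (1 / Real.sqrt l * E ^ 3) := by ring
    rw [e]
    have : 0 ≤ 1 / Real.sqrt l * E ^ 3 := by positivity
    linarith
  have h7 : E ^ 3 * Real.exp (-(l * u ^ 2) / 2) ≤ Real.exp (-(l / 4) * u ^ 2) := by
    rw [hE, ← Real.exp_nat_mul, ← Real.exp_add]
    apply Real.exp_le_exp.mpr
    push_cast; nlinarith
  calc _ = (l * |u| ^ 3 + 400 * (|u| + x)) * Real.exp (-(l * u ^ 2) / 2) := by ring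
    _ ≤ (2100 / Real.sqrt l * E ^ 3) * Real.exp (-(l * u ^ 2) / 2) := by gcongr
    _ = 2100 / Real.sqrt l * (E ^ 3 * Real.exp (-(l * u ^ 2) / 2)) := by ring
    _ ≤ _ := by gcongr

/-! ### The circle method -/

lemma zl_eq_zz (x u : ℝ) : zl x (x * u) = zz x u := by
  rw [zl, zz]; push_cast; ring

lemma norm_exp_quot {l u : ℝ} (hl : 0 ≤ l) (hu : |u| ≤ 1) :
    ‖Complex.exp (-(l * u ^ 2 : ℝ) / (1 + u * Complex.I))‖ ≤ Real.exp (-(l * u ^ 2) / 2) := by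
  have hu2 : u ^ 2 ≤ 1 := by rw [sq_le_one_iff_abs_le_one]; exact hu
  have : (-(l * u ^ 2 : ℝ) / (1 + u * Complex.I) : ℂ).re = -(l * u ^ 2) / (1 + u ^ 2) := by
    rw [div_eq_mul_inv, ← Complex.ofReal_neg, Complex.re_ofReal_mul, Complex.inv_re]
    have : Complex.normSq (1 + u * Complex.I) = 1 + u ^ 2 := by
      simp [Complex.normSq_apply]; ring
    rw [this]; simp; ring
  rw [Complex.norm_exp, this]
  apply Real.exp_le_exp.mpr
  rw [neg_div, neg_div, neg_le_neg_iff]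
  gcongr; linarith

lemma exp_combine {x u : ℝ} {n : ℕ} (hx : 0 < x) (hn : (n : ℝ) * (8 * x ^ 2) = π ^ 2) :
    Complex.exp (n * zz x u) * Complex.exp (π ^ 2 / (8 * zz x u)) =
      (Real.exp (π ^ 2 / (4 * x)) : ℝ) *
        Complex.exp (-(π ^ 2 / (8 * x) * u ^ 2 : ℝ) / (1 + u * Complex.I)) := by
  have hx0 : (x : ℂ) ≠ 0 := by exact_mod_cast hx.ne'
  have hv : (1 + u * Complex.I : ℂ) ≠ 0 := by
    intro h; have := congrArg Complex.re h; simp at this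
  have hnC : (n : ℂ) = π ^ 2 / (8 * x ^ 2) := by
    rw [eq_div_iff (by simpa using hx.ne')]; exact_mod_cast hn
  rw [Complex.ofReal_exp, ← Complex.exp_add, ← Complex.exp_add, hnC, zz]
  congr 1
  push_cast
  field_simp
  ring_nf
  rw [Complex.I_sq]; ring

lemma GG_major {x u : ℝ} {n : ℕ} (hx : 0 < x) (hx4 : x ≤ 1 / 4)
    (hn : (n : ℝ) * (8 * x ^ 2) = π ^ 2) (hu : |u| ≤ 1) :
    ‖GG n x (x * u) - ((Real.sqrt (x / π) * x * Real.exp (π ^ 2 / (4 * x)) *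
      Real.exp (-(π ^ 2 / (8 * x)) * u ^ 2) : ℝ) : ℂ)‖ ≤
    Real.sqrt (x / π) * x * Real.exp (π ^ 2 / (4 * x)) *
      (2100 / Real.sqrt (π ^ 2 / (8 * x)) * Real.exp (-(π ^ 2 / (8 * x) / 4) * u ^ 2)) := by
  have hpi := Real.pi_pos
  have hl : 0 < π ^ 2 / (8 * x) := by positivity
  have hxl : x ≤ 1 / Real.sqrt (π ^ 2 / (8 * x)) := by
    rw [le_div_iff₀ (Real.sqrt_pos.mpr hl)]
    have : Real.sqrt (π ^ 2 / (8 * x)) ≤ 1 / x := by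
      rw [Real.sqrt_le_left (by positivity), div_pow, div_le_div_iff₀ (by positivity) (by positivity)]
      have : π ^ 2 ≤ 16 := by nlinarith [Real.pi_lt_four]
      have : π ^ 2 * x ≤ 8 := by nlinarith
      nlinarith
    calc x * Real.sqrt (π ^ 2 / (8 * x)) ≤ x * (1 / x) := by gcongr
      _ = 1 := by field_simp
  have h1 := PA_major hx hx4 hu
  have h2 := exp_diff_bound hl.le hu
  have h3 := gauss_err (u := u) hl hxl
  have h4 := norm_exp_quot hl.le hu
  have h5 := exp_combine (u := u) hx hn
  rw [GG, zl_eq_zz]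
  set l := π ^ 2 / (8 * x) with hl_def
  set A := Real.sqrt (x / π) * x with hA
  have hA0 : 0 ≤ A := by positivity
  set E := Real.exp (π ^ 2 / (4 * x)) with hE
  have hE0 : 0 < E := Real.exp_pos _
  set Q := Complex.exp (-(l * u ^ 2 : ℝ) / (1 + u * Complex.I)) with hQ
  set W := PA (Complex.exp (-zz x u)) * (1 - Complex.exp (-zz x u)) with hW
  set T := Complex.exp (n * zz x u) with hT
  set V := Complex.exp (π ^ 2 / (8 * zz x u)) with hV
  have e : T * W - ((A * E * Real.exp (-l * u ^ 2) : ℝ) : ℂ) =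
      T * (W - (A : ℂ) * V) + ((A * E : ℝ) : ℂ) * (Q - (Real.exp (-l * u ^ 2) : ℝ)) := by
    push_cast
    linear_combination (A : ℂ) * h5
  rw [e]
  have hTV : ‖T‖ * ‖V‖ = E * ‖Q‖ := by
    rw [← norm_mul, h5, norm_mul, Complex.norm_real, Real.norm_of_nonneg hE0.le]
  have b1 : ‖T * (W - (A : ℂ) * V)‖ ≤ A * E * (400 * (|u| + x) * Real.exp (-(l * u ^ 2) / 2)) := by
    rw [norm_mul]
    calc ‖T‖ * ‖W - (A : ℂ) * V‖ ≤ ‖T‖ * (400 * (|u| + x) * (A * ‖V‖)) := by gcongr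
      _ = 400 * (|u| + x) * A * (‖T‖ * ‖V‖) := by ring
      _ = 400 * (|u| + x) * A * (E * ‖Q‖) := by rw [hTV]
      _ ≤ 400 * (|u| + x) * A * (E * Real.exp (-(l * u ^ 2) / 2)) := by gcongr
      _ = _ := by ring
  have b2 : ‖((A * E : ℝ) : ℂ) * (Q - (Real.exp (-l * u ^ 2) : ℝ))‖ ≤
      A * E * (Real.exp (-(l * u ^ 2) / 2) * (l * |u| ^ 3)) := by
    rw [norm_mul, Complex.norm_real, Real.norm_of_nonneg (by positivity)]
    gcongr
  calc _ ≤ _ := norm_add_le _ _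
    _ ≤ _ := add_le_add b1 b2
    _ = A * E * (Real.exp (-(l * u ^ 2) / 2) * (l * |u| ^ 3) +
      400 * (|u| + x) * Real.exp (-(l * u ^ 2) / 2)) := by ring
    _ ≤ _ := by gcongr

lemma major_integral {x : ℝ} {n : ℕ} (hx : 0 < x) (hx4 : x ≤ 1 / 4)
    (hn : (n : ℝ) * (8 * x ^ 2) = π ^ 2) :
    ‖(∫ y in (-x)..x, GG n x y) - ((x * (Real.sqrt (x / π) * x) *
      Real.sqrt (π / (π ^ 2 / (8 * x))) * Real.exp (π ^ 2 / (4 * x)) : ℝ) : ℂ)‖ ≤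
    8416 * (x ^ 3 * Real.sqrt x) * Real.exp (π ^ 2 / (4 * x)) := by
  have hpi := Real.pi_pos
  have hl : 0 < π ^ 2 / (8 * x) := by positivity
  have hmaj := fun u (hu : |u| ≤ 1) => GG_major hx hx4 hn hu
  have hlx : 1 / (π ^ 2 / (8 * x)) ≤ x := by
    rw [one_div_div, div_le_iff₀ (by positivity)]
    have h9 : 8 ≤ π ^ 2 := by nlinarith [Real.pi_gt_three]
    nlinarith
  have hA1 : Real.sqrt (x / π) * x ≤ Real.sqrt x * x := by
    gcongr
    exact div_le_self hx.le (by linarith [Real.pi_gt_three])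
  set l := π ^ 2 / (8 * x) with hl_def
  set A := Real.sqrt (x / π) * x with hA
  have hA0 : 0 ≤ A := by positivity
  set E := Real.exp (π ^ 2 / (4 * x)) with hE
  have hE0 : 0 < E := Real.exp_pos _
  have hsub : ∫ y in (-x)..x, GG n x y = (x : ℂ) * ∫ u in (-1 : ℝ)..1, GG n x (x * u) := by
    have := intervalIntegral.smul_integral_comp_mul_left (a := -1) (b := 1) (GG n x) x
    rw [mul_neg_one, mul_one] at this
    rw [← this, Complex.real_smul]
  have hc1 : Continuous fun u => GG n x (x * u) :=
    (continuous_GG hx n).comp (continuous_const.mul continuous_id)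
  have hd : ‖(∫ u in (-1 : ℝ)..1, GG n x (x * u)) -
      ∫ u in (-1 : ℝ)..1, ((A * E * Real.exp (-l * u ^ 2) : ℝ) : ℂ)‖ ≤ A * E * (8400 / l) := by
    rw [← intervalIntegral.integral_sub (hc1.intervalIntegrable _ _)
      (by apply Continuous.intervalIntegrable; fun_prop)]
    refine (intervalIntegral.norm_integral_le_of_norm_le (by norm_num)
      (Filter.Eventually.of_forall fun u hu => hmaj u (abs_le.mpr ⟨hu.1.le, hu.2⟩))
      (by apply Continuous.intervalIntegrable; fun_prop)).trans ?_
    rw [intervalIntegral.integral_const_mul, intervalIntegral.integral_const_mul]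
    gcongr
    have h1 := gauss_interval_le (b := l / 4) (by positivity)
    have h2 := sqrt_four_pi_div hl
    calc _ ≤ 2100 / Real.sqrt l * Real.sqrt (π / (l / 4)) := by gcongr
      _ = 2100 * (1 / Real.sqrt l * Real.sqrt (π / (l / 4))) := by ring
      _ ≤ 2100 * (4 / l) := by gcongr
      _ = _ := by ring
  have hm := gauss_main hl
  rw [intervalIntegral.integral_ofReal, intervalIntegral.integral_const_mul] at hd
  rw [hsub]
  set I1 := ∫ u in (-1 : ℝ)..1, GG n x (x * u) with hI1
  set I2 := ∫ u in (-1 : ℝ)..1, Real.exp (-l * u ^ 2) with hI2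
  have e : (x : ℂ) * I1 - ((x * A * Real.sqrt (π / l) * E : ℝ) : ℂ) =
      (x : ℂ) * (I1 - ((A * E * I2 : ℝ) : ℂ)) +
        ((x * A * E * (I2 - Real.sqrt (π / l)) : ℝ) : ℂ) := by
    push_cast; ring
  rw [e]
  have b1 : ‖(x : ℂ) * (I1 - ((A * E * I2 : ℝ) : ℂ))‖ ≤ x * (A * E * (8400 / l)) := by
    rw [norm_mul, Complex.norm_real, Real.norm_of_nonneg hx.le]; gcongr
  have b2 : ‖((x * A * E * (I2 - Real.sqrt (π / l)) : ℝ) : ℂ)‖ ≤ x * A * E * (16 / l) := by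
    rw [Complex.norm_real, Real.norm_eq_abs, abs_mul, abs_of_nonneg (by positivity)]; gcongr
  calc _ ≤ _ := norm_add_le _ _
    _ ≤ _ := add_le_add b1 b2
    _ = 8416 * (x * A * (1 / l)) * E := by ring
    _ ≤ 8416 * (x * (Real.sqrt x * x) * x) * E := by gcongr
    _ = _ := by ring

lemma GG_minor {x y : ℝ} {n : ℕ} (hx : 0 < x) (hx4 : x ≤ 1 / 4)
    (hn : (n : ℝ) * (8 * x ^ 2) = π ^ 2) (hxy : x ≤ |y|) (hy : |y| ≤ π) :
    ‖GG n x y‖ ≤ 8 * 2058000 * (x ^ 3 * Real.sqrt x) * Real.exp (π ^ 2 / (4 * x)) := by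
  have hpi := Real.pi_pos
  have h1 := norm_PA_le (norm_exp_neg_zl_lt hx y)
  rw [norm_exp_neg_zl] at h1
  have h2 := minor_exponent hx (by linarith) hxy hy
  have h3 := PA_real_bound hx hx4
  have h4 : ‖1 - Complex.exp (-zl x y)‖ ≤ 2 := by
    refine (norm_sub_le _ _).trans ?_
    have := norm_exp_neg_zl_lt hx y
    rw [norm_one]; linarith
  have h5 : ‖Complex.exp (n * zl x y)‖ = Real.exp (π ^ 2 / (8 * x)) := by
    rw [Complex.norm_exp]; congr 1
    have : (n : ℝ) = π ^ 2 / (8 * x ^ 2) := by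
      rw [eq_div_iff (by positivity)]; exact hn
    rw [← Complex.ofReal_natCast, Complex.re_ofReal_mul, zl_re, this]
    field_simp
  have h6 : Real.exp (-(1 / (70 * x))) ≤ 2058000 * x ^ 3 := by
    have h := Real.pow_div_factorial_le_exp (1 / (70 * x)) (by positivity) 3
    rw [Real.exp_neg, inv_le_comm₀ (Real.exp_pos _) (by positivity)]
    refine le_trans (le_of_eq ?_) h
    norm_num [Nat.factorial]
    field_simp
    norm_num
  have h7 : ‖PA (Complex.exp (-zl x y))‖ ≤
      4 * Real.sqrt x * Real.exp (π ^ 2 / (8 * x)) * (2058000 * x ^ 3) := by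
    refine h1.trans ?_
    gcongr
    refine le_trans (Real.exp_le_exp.mpr ?_) h6
    rw [neg_le_neg_iff]
    exact h2
  rw [GG, norm_mul, norm_mul, h5]
  have e : Real.exp (π ^ 2 / (4 * x)) = Real.exp (π ^ 2 / (8 * x)) * Real.exp (π ^ 2 / (8 * x)) := by
    rw [← Real.exp_add]; congr 1; field_simp; norm_num
  rw [e]
  calc _ ≤ Real.exp (π ^ 2 / (8 * x)) *
      ((4 * Real.sqrt x * Real.exp (π ^ 2 / (8 * x)) * (2058000 * x ^ 3)) * 2) := by gcongr
    _ = _ := by ring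

lemma minor_integral {x : ℝ} {n : ℕ} (hx : 0 < x) (hx4 : x ≤ 1 / 4)
    (hn : (n : ℝ) * (8 * x ^ 2) = π ^ 2) :
    ‖(∫ y in (-π)..(-x), GG n x y) + ∫ y in x..π, GG n x y‖ ≤
      64 * 2058000 * (x ^ 3 * Real.sqrt x) * Real.exp (π ^ 2 / (4 * x)) := by
  have hpi := Real.pi_gt_three
  have hpi4 := Real.pi_lt_four
  set B := 8 * 2058000 * (x ^ 3 * Real.sqrt x) * Real.exp (π ^ 2 / (4 * x)) with hB
  have hB0 : 0 ≤ B := by positivity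
  have h1 : ‖∫ y in (-π)..(-x), GG n x y‖ ≤ B * |(-x) - (-π)| := by
    refine intervalIntegral.norm_integral_le_of_norm_le_const fun y hy => ?_
    rw [Set.uIoc_of_le (by linarith)] at hy
    refine GG_minor hx hx4 hn ?_ ?_
    · rw [abs_of_nonpos (by linarith [hy.2])]; linarith [hy.2]
    · rw [abs_of_nonpos (by linarith [hy.2])]; linarith [hy.1]
  have h2 : ‖∫ y in x..π, GG n x y‖ ≤ B * |π - x| := by
    refine intervalIntegral.norm_integral_le_of_norm_le_const fun y hy => ?_
    rw [Set.uIoc_of_le (by linarith)] at hy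
    refine GG_minor hx hx4 hn ?_ ?_
    · rw [abs_of_nonneg (by linarith [hy.1])]; linarith [hy.1]
    · rw [abs_of_nonneg (by linarith [hy.1])]; linarith [hy.2]
  rw [abs_of_nonneg (by linarith)] at h1 h2
  refine (norm_add_le _ _).trans ?_
  have : 64 * 2058000 * (x ^ 3 * Real.sqrt x) * Real.exp (π ^ 2 / (4 * x)) = 8 * B := by
    rw [hB]; ring
  rw [this]
  nlinarith

lemma diff_asymp_x {x : ℝ} {n : ℕ} (hx : 0 < x) (hx4 : x ≤ 1 / 4) (hn1 : 1 ≤ n)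
    (hn : (n : ℝ) * (8 * x ^ 2) = π ^ 2) :
    |2 * π * ((podCount n : ℝ) - podCount (n - 1)) - x * (Real.sqrt (x / π) * x) *
      Real.sqrt (π / (π ^ 2 / (8 * x))) * Real.exp (π ^ 2 / (4 * x))| ≤
    200000000 * (x ^ 3 * Real.sqrt x) * Real.exp (π ^ 2 / (4 * x)) := by
  have h1 := major_integral hx hx4 hn
  have h2 := minor_integral hx hx4 hn
  have h3 := cauchy_diff hx hn1
  have hi : ∀ a b, IntervalIntegrable (GG n x) MeasureTheory.volume a b :=
    fun a b => (continuous_GG hx n).intervalIntegrable a b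
  rw [← intervalIntegral.integral_add_adjacent_intervals (hi (-π) (-x)) (hi (-x) π),
    ← intervalIntegral.integral_add_adjacent_intervals (hi (-x) x) (hi x π)] at h3
  set M := x * (Real.sqrt (x / π) * x) *
      Real.sqrt (π / (π ^ 2 / (8 * x))) * Real.exp (π ^ 2 / (4 * x)) with hM
  set a := ∫ y in (-π)..(-x), GG n x y
  set b := ∫ y in (-x)..x, GG n x y
  set c := ∫ y in x..π, GG n x y
  have e : ((2 * π * ((podCount n : ℝ) - podCount (n - 1)) - M : ℝ) : ℂ) =
      (b - (M : ℂ)) + (a + c) := by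
    push_cast; rw [← h3]; ring
  rw [← Real.norm_eq_abs, ← Complex.norm_real, e]
  refine (norm_add_le _ _).trans ((add_le_add h1 h2).trans ?_)
  have : 0 ≤ x ^ 3 * Real.sqrt x * Real.exp (π ^ 2 / (4 * x)) := by positivity
  nlinarith

/-! ### First differences of pod -/

/-- The main term. -/
noncomputable def FF (t : ℝ) : ℝ :=
  π / 16 * t ^ (-(3 : ℝ) / 2) * Real.exp (π * Real.sqrt t / Real.sqrt 2)

/-- The error term. -/
noncomputable def EE (t : ℝ) : ℝ :=
  t ^ (-(7 : ℝ) / 4) * Real.exp (π * Real.sqrt t / Real.sqrt 2)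

lemma rpow_three_half {t : ℝ} (ht : 0 < t) : t ^ (-(3 : ℝ) / 2) = 1 / Real.sqrt t ^ 3 := by
  rw [Real.sqrt_eq_rpow, ← Real.rpow_natCast, ← Real.rpow_mul ht.le, one_div,
    ← Real.rpow_neg ht.le]
  norm_num

lemma rpow_seven_four {t : ℝ} (ht : 0 < t) :
    t ^ (-(7 : ℝ) / 4) = 1 / (Real.sqrt t ^ 3 * Real.sqrt (Real.sqrt t)) := by
  rw [Real.sqrt_eq_rpow, Real.sqrt_eq_rpow, ← Real.rpow_natCast, ← Real.rpow_mul ht.le,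
    ← Real.rpow_mul ht.le, ← Real.rpow_add ht, one_div, ← Real.rpow_neg ht.le]
  norm_num

lemma diff_asymp {n : ℕ} (hn : 32 ≤ n) :
    |((podCount n : ℝ) - podCount (n - 1)) - FF n| ≤ 3200000000 * EE n := by
  have hpi := Real.pi_gt_three
  have hpi4 := Real.pi_lt_four
  have hnR : (32 : ℝ) ≤ n := by exact_mod_cast hn
  have hn0 : (0 : ℝ) < n := by linarith
  set r := Real.sqrt n with hr
  have hr0 : 0 < r := Real.sqrt_pos.mpr hn0
  have hr2 : r ^ 2 = n := Real.sq_sqrt hn0.le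
  set s := Real.sqrt 2 with hs
  have hs0 : 0 < s := Real.sqrt_pos.mpr (by norm_num)
  have hs2 : s ^ 2 = 2 := Real.sq_sqrt (by norm_num)
  set x := π / (2 * s * r) with hx
  have hx0 : 0 < x := by positivity
  have hsr : 8 ≤ s * r := by
    have : 8 ^ 2 ≤ (s * r) ^ 2 := by rw [mul_pow, hs2, hr2]; linarith
    exact le_of_sq_le_sq this (by positivity)
  have hx4 : x ≤ 1 / 4 := by
    rw [hx, div_le_div_iff₀ (by positivity) (by norm_num)]; linarith
  have hnx : (n : ℝ) * (8 * x ^ 2) = π ^ 2 := by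
    rw [hx, ← hr2, div_pow, mul_pow, mul_pow, hs2]; field_simp; norm_num
  have h := diff_asymp_x hx0 hx4 (by omega) hnx
  have hE : π ^ 2 / (4 * x) = π * r / s := by
    rw [hx]; field_simp; rw [hs2]; norm_num
  have hmain : x * (Real.sqrt (x / π) * x) * Real.sqrt (π / (π ^ 2 / (8 * x))) =
      2 * π * (π / 16 * (1 / r ^ 3)) := by
    have e1 : Real.sqrt (x / π) * Real.sqrt (π / (π ^ 2 / (8 * x))) = 1 / r := by
      rw [← Real.sqrt_mul (by positivity)]
      have : x / π * (π / (π ^ 2 / (8 * x))) = (1 / r) ^ 2 := by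
        rw [hx]; field_simp; rw [hs2]; norm_num
      rw [this, Real.sqrt_sq (by positivity)]
    calc _ = x ^ 2 * (Real.sqrt (x / π) * Real.sqrt (π / (π ^ 2 / (8 * x)))) := by ring
      _ = x ^ 2 * (1 / r) := by rw [e1]
      _ = _ := by rw [hx, div_pow, mul_pow, mul_pow, hs2]; field_simp; norm_num
  have hxr : x ≤ 2 / r := by
    have : 1 ≤ s := by
      have : (1 : ℝ) ^ 2 ≤ s ^ 2 := by rw [hs2]; norm_num
      exact le_of_sq_le_sq this (by positivity)
    rw [hx, div_le_div_iff₀ (by positivity) hr0]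
    nlinarith
  have hx3 : x ^ 3 * Real.sqrt x ≤ 16 * (1 / (r ^ 3 * Real.sqrt r)) := by
    have h1 : Real.sqrt x ≤ 2 / Real.sqrt r := by
      refine (Real.sqrt_le_sqrt (hxr.trans (by gcongr; norm_num : 2 / r ≤ 2 ^ 2 / r))).trans ?_
      rw [Real.sqrt_div (by norm_num), Real.sqrt_sq (by norm_num)]
    have h0 := Real.sqrt_pos.mpr hr0
    calc x ^ 3 * Real.sqrt x ≤ (2 / r) ^ 3 * (2 / Real.sqrt r) := by gcongr
      _ = _ := by field_simp; norm_num
  rw [hmain, hE] at h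
  rw [FF, EE, rpow_three_half hn0, rpow_seven_four hn0, ← hr, ← hs]
  set E := Real.exp (π * r / s) with hEd
  have hE0 : 0 < E := Real.exp_pos _
  set D := (podCount n : ℝ) - podCount (n - 1) with hD
  have e : 2 * π * D - 2 * π * (π / 16 * (1 / r ^ 3)) * E =
      2 * π * (D - π / 16 * (1 / r ^ 3) * E) := by ring
  rw [e, abs_mul, abs_of_pos (by positivity)] at h
  have h2 : 200000000 * (x ^ 3 * Real.sqrt x) * E ≤
      200000000 * (16 * (1 / (r ^ 3 * Real.sqrt r))) * E := by gcongr
  nlinarith [abs_nonneg (D - π / 16 * (1 / r ^ 3) * E)]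

lemma FF_deriv {t : ℝ} (ht : 0 < t) : HasDerivAt FF
    (π / 16 * (-(3 : ℝ) / 2 * t ^ (-(3 : ℝ) / 2 - 1)) * Real.exp (π * Real.sqrt t / Real.sqrt 2) +
      π / 16 * t ^ (-(3 : ℝ) / 2) * (Real.exp (π * Real.sqrt t / Real.sqrt 2) *
        (π * (1 / (2 * Real.sqrt t)) / Real.sqrt 2))) t := by
  have h1 := (Real.hasDerivAt_rpow_const (x := t) (p := -(3 : ℝ) / 2) (Or.inl ht.ne')).const_mul
    (π / 16)
  have h2 := (((Real.hasDerivAt_sqrt ht.ne').const_mul π).div_const (Real.sqrt 2)).exp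
  exact h1.mul h2

lemma FF_deriv_bound {t : ℝ} (ht : 1 ≤ t) :
    ‖deriv FF t‖ ≤ 2 * (1 / Real.sqrt t ^ 4 * Real.exp (π * Real.sqrt t / Real.sqrt 2)) := by
  have hpi := Real.pi_gt_three
  have hpi4 := Real.pi_lt_four
  have ht0 : 0 < t := by linarith
  rw [(FF_deriv ht0).deriv, rpow_three_half ht0, Real.rpow_sub_one ht0.ne', rpow_three_half ht0]
  set r := Real.sqrt t with hr
  have hr0 : 0 < r := Real.sqrt_pos.mpr ht0
  have hr1 : 1 ≤ r := Real.one_le_sqrt.mpr ht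
  have hr2 : t = r ^ 2 := (Real.sq_sqrt ht0.le).symm
  set s := Real.sqrt 2 with hs
  have hs1 : 1 ≤ s := Real.one_le_sqrt.mpr (by norm_num)
  have hs0 : 0 < s := by linarith
  set E := Real.exp (π * r / s) with hE
  have hE0 : 0 < E := Real.exp_pos _
  rw [hr2]
  have e : π / 16 * (-(3 : ℝ) / 2 * (1 / r ^ 3 / r ^ 2)) * E +
      π / 16 * (1 / r ^ 3) * (E * (π * (1 / (2 * r)) / s)) =
      (1 / r ^ 4 * E) * (-(3 * π / 32 / r) + π ^ 2 / 32 / s) := by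
    field_simp; norm_num; ring
  rw [e, norm_mul, Real.norm_of_nonneg (by positivity), mul_comm]
  gcongr
  rw [Real.norm_eq_abs]
  have a1 : 3 * π / 32 / r ≤ 3 * π / 32 := div_le_self (by positivity) hr1
  have a2 : π ^ 2 / 32 / s ≤ π ^ 2 / 32 := div_le_self (by positivity) hs1
  have a3 : 0 ≤ 3 * π / 32 / r := by positivity
  have a4 : 0 ≤ π ^ 2 / 32 / s := by positivity
  rw [abs_le]; constructor <;> nlinarith

lemma FF_shift {n s : ℝ} (hs : 0 ≤ s) (hsn : s ≤ n / 2) (hn : 2 ≤ n)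
    (hs4 : s ≤ 2 * Real.sqrt (Real.sqrt n)) :
    |FF (n - s) - FF n| ≤ 16 * EE n := by
  have hn0 : 0 < n := by linarith
  set r := Real.sqrt n with hr
  have hr0 : 0 < r := Real.sqrt_pos.mpr hn0
  have hr2 : r ^ 2 = n := Real.sq_sqrt hn0.le
  set E := Real.exp (π * r / Real.sqrt 2) with hE
  have hE0 : 0 < E := Real.exp_pos _
  have h := (convex_Icc (n / 2) n).norm_image_sub_le_of_norm_deriv_le (f := FF)
    (C := 8 * (1 / r ^ 4 * E))
    (fun t ht => (FF_deriv (by linarith [ht.1])).differentiableAt)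
    (fun t ht => by
      have ht0 : 0 < t := by linarith [ht.1]
      refine (FF_deriv_bound (by linarith [ht.1])).trans ?_
      have h1 : Real.sqrt t ^ 4 = t ^ 2 := by
        rw [show 4 = 2 * 2 by norm_num, pow_mul, Real.sq_sqrt ht0.le]
      have h2 : r ^ 4 = n ^ 2 := by rw [← hr2]; ring
      have h3 : Real.exp (π * Real.sqrt t / Real.sqrt 2) ≤ E := by
        rw [hE]; apply Real.exp_le_exp.mpr
        have := Real.sqrt_le_sqrt ht.2
        have := Real.pi_pos
        gcongr
      have h4 : 1 / t ^ 2 ≤ 4 * (1 / n ^ 2) := by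
        have : (n / 2) ^ 2 ≤ t ^ 2 := by
          have := ht.1
          gcongr
        rw [mul_one_div, div_le_div_iff₀ (by positivity) (by positivity)]
        nlinarith
      rw [h1, h2]
      calc 2 * (1 / t ^ 2 * Real.exp (π * Real.sqrt t / Real.sqrt 2)) ≤
          2 * (4 * (1 / n ^ 2) * E) := by gcongr
        _ = _ := by ring)
    (x := n) (y := n - s) ⟨by linarith, le_refl _⟩ ⟨by linarith, by linarith⟩
  rw [Real.norm_eq_abs, sub_sub_cancel_left, norm_neg, Real.norm_of_nonneg hs] at h
  refine h.trans ?_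
  rw [EE, rpow_seven_four hn0, ← hr, ← hE]
  have hq0 := Real.sqrt_pos.mpr hr0
  have hq2 : Real.sqrt r ^ 2 = r := Real.sq_sqrt hr0.le
  set q := Real.sqrt r with hq
  calc 8 * (1 / r ^ 4 * E) * s ≤ 8 * (1 / r ^ 4 * E) * (2 * q) := by gcongr
    _ = _ := by rw [← hq2]; field_simp; norm_num

lemma EE_shift {n s : ℝ} (hs : 0 ≤ s) (hsn : s ≤ n / 2) (hn : 2 ≤ n) :
    EE (n - s) ≤ 16 * EE n := by
  have hn0 : 0 < n := by linarith
  have hns : 0 < n - s := by linarith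
  rw [EE, EE, ← mul_assoc]
  gcongr ?_ * Real.exp (π * Real.sqrt ?_ / Real.sqrt 2)
  · have h1 : (n - s) ^ (-(7 : ℝ) / 4) ≤ (n / 2) ^ (-(7 : ℝ) / 4) :=
      Real.rpow_le_rpow_of_nonpos (by positivity) (by linarith) (by norm_num)
    have h2 : (n / 2) ^ (-(7 : ℝ) / 4) = n ^ (-(7 : ℝ) / 4) * 2 ^ ((7 : ℝ) / 4) := by
      rw [Real.div_rpow hn0.le (by norm_num), div_eq_mul_inv, ← Real.rpow_neg (by norm_num)]
      norm_num
    have h3 : (2 : ℝ) ^ ((7 : ℝ) / 4) ≤ 16 := by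
      calc (2 : ℝ) ^ ((7 : ℝ) / 4) ≤ 2 ^ (4 : ℝ) :=
            Real.rpow_le_rpow_of_exponent_le (by norm_num) (by norm_num)
        _ = 16 := by norm_num
    have h4 : 0 < n ^ (-(7 : ℝ) / 4) := Real.rpow_pos_of_pos hn0 _
    rw [h2] at h1
    nlinarith
  · linarith

/-! ### Conclusion -/

lemma podZ_diff {n s : ℕ} (hs : s + 1 ≤ n) :
    ((podZ ((n : ℤ) - s) : ℝ) - podZ ((n : ℤ) - (s + 1))) =
      (podCount (n - s) : ℝ) - podCount (n - s - 1) := by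
  have e1 : ((n : ℤ) - s) = ((n - s : ℕ) : ℤ) := by omega
  have e2 : ((n : ℤ) - (s + 1)) = ((n - s - 1 : ℕ) : ℤ) := by omega
  rw [e1, e2, podZ, podZ, if_pos (by omega), if_pos (by omega), Int.toNat_natCast,
    Int.toNat_natCast]
  norm_cast

lemma alt_sum (k : ℕ) :
    ∑ j ∈ Finset.range (k + 1), (-1 : ℝ) ^ j * (2 * j + 1) = (-1) ^ k * (k + 1) := by
  induction k with
  | zero => simp
  | succ k ih => rw [Finset.sum_range_succ, ih]; push_cast; ring

lemma odd_sum (k : ℕ) : ∑ j ∈ Finset.range k, (2 * (j : ℝ) + 1) = k ^ 2 := by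
  induction k with
  | zero => simp
  | succ k ih => rw [Finset.sum_range_succ, ih]; push_cast; ring

lemma one_diff {n s : ℕ} {q : ℝ} (hq : q = Real.sqrt (Real.sqrt n)) (hn : 64 ≤ n)
    (hs : (s : ℝ) ≤ 2 * q) :
    |((podZ ((n : ℤ) - s) : ℝ) - podZ ((n : ℤ) - (s + 1))) - FF n| ≤ 60000000000 * EE n := by
  have hnR : (64 : ℝ) ≤ n := by exact_mod_cast hn
  have hq2 : q ^ 2 = Real.sqrt n := by rw [hq]; exact Real.sq_sqrt (Real.sqrt_nonneg _)
  have hq4 : q ^ 4 = n := by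
    rw [show 4 = 2 * 2 by norm_num, pow_mul, hq2]; exact Real.sq_sqrt (by positivity)
  have hq0 : 0 ≤ q := by rw [hq]; positivity
  have hq22 : 2 ≤ q := by
    by_contra hc
    have : q ^ 4 < 2 ^ 4 := by
      have := not_le.mp hc
      gcongr
    rw [hq4] at this; linarith
  have hsn : (s : ℝ) ≤ n / 2 := by
    rw [← hq4]
    have : (8 : ℝ) ≤ q ^ 3 := by
      calc (8 : ℝ) = 2 ^ 3 := by norm_num
        _ ≤ _ := by gcongr
    nlinarith
  have hsn' : 2 * s ≤ n := by
    have : (2 : ℝ) * s ≤ n := by linarith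
    exact_mod_cast this
  rw [podZ_diff (by omega)]
  have h1 := diff_asymp (n := n - s) (by omega)
  have hc : ((n - s : ℕ) : ℝ) = (n : ℝ) - s := by
    rw [Nat.cast_sub (by omega)]
  rw [hc] at h1
  have h2 := FF_shift (n := n) (s := s) (by positivity) hsn (by linarith) (by rw [← hq]; exact hs)
  have h3 := EE_shift (n := n) (s := s) (by positivity) hsn (by linarith)
  have h4 : 0 ≤ EE n := by rw [EE]; positivity
  set D := (podCount (n - s) : ℝ) - podCount (n - s - 1)
  calc |D - FF n| = |(D - FF (n - s)) + (FF (n - s) - FF n)| := by congr 1; ring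
    _ ≤ |D - FF (n - s)| + |FF (n - s) - FF n| := abs_add_le _ _
    _ ≤ _ := by linarith

lemma block_diff {n k j : ℕ} (hn : 64 ≤ n) (hk : (k : ℝ) ^ 8 ≤ n) (hj : j < k) :
    |((podZ ((n : ℤ) - (j : ℤ) * (2 * j + 1)) : ℝ) - podZ ((n : ℤ) - ((j : ℤ) + 1) * (2 * j + 1))) -
      (2 * j + 1) * FF n| ≤ (2 * j + 1) * (60000000000 * EE n) := by
  set q := Real.sqrt (Real.sqrt n) with hq
  have hq2 : q ^ 2 = Real.sqrt n := by rw [hq]; exact Real.sq_sqrt (Real.sqrt_nonneg _)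
  have hq4 : q ^ 4 = n := by
    rw [show 4 = 2 * 2 by norm_num, pow_mul, hq2]; exact Real.sq_sqrt (by positivity)
  have hkq : (k : ℝ) ^ 2 ≤ q := by
    have : ((k : ℝ) ^ 2) ^ 4 ≤ q ^ 4 := by rw [hq4, ← pow_mul]; exact hk
    exact le_of_pow_le_pow_left₀ (by norm_num) (by positivity) this
  set f : ℕ → ℝ := fun i => (podZ ((n : ℤ) - ((j * (2 * j + 1) + i : ℕ) : ℤ)) : ℝ) with hf
  have e : ((podZ ((n : ℤ) - (j : ℤ) * (2 * j + 1)) : ℝ) -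
      podZ ((n : ℤ) - ((j : ℤ) + 1) * (2 * j + 1))) =
      ∑ i ∈ Finset.range (2 * j + 1), (f i - f (i + 1)) := by
    rw [Finset.sum_range_sub']
    simp only [hf]
    congr 4 <;> push_cast <;> ring
  have e2 : (2 * (j : ℝ) + 1) * FF n = ∑ i ∈ Finset.range (2 * j + 1), FF n := by
    rw [Finset.sum_const, Finset.card_range, nsmul_eq_mul]; push_cast; ring
  have e3 : (2 * (j : ℝ) + 1) * (60000000000 * EE n) =
      ∑ i ∈ Finset.range (2 * j + 1), 60000000000 * EE n := by
    rw [Finset.sum_const, Finset.card_range, nsmul_eq_mul]; push_cast; ring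
  rw [e, e2, e3, ← Finset.sum_sub_distrib]
  refine (Finset.abs_sum_le_sum_abs _ _).trans (Finset.sum_le_sum fun i hi => ?_)
  rw [Finset.mem_range] at hi
  have hs : ((j * (2 * j + 1) + i : ℕ) : ℝ) ≤ 2 * q := by
    have h1 : j * (2 * j + 1) + i ≤ 2 * k ^ 2 := by
      obtain ⟨d, rfl⟩ := Nat.exists_eq_add_of_lt hj
      nlinarith
    have h2 : ((j * (2 * j + 1) + i : ℕ) : ℝ) ≤ ((2 * k ^ 2 : ℕ) : ℝ) := by exact_mod_cast h1
    refine h2.trans ?_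
    push_cast; linarith
  have := one_diff hq hn hs
  simp only [hf]
  rw [show (((j * (2 * j + 1) + (i + 1) : ℕ) : ℤ)) = ((j * (2 * j + 1) + i : ℕ) : ℤ) + 1 by
    push_cast; ring]
  exact this

theorem MP_asymptotic (ε : ℝ) (hε : 0 < ε) :
    ∃ C : ℝ, 0 < C ∧ ∃ N : ℕ, ∀ n : ℕ, N ≤ n → ∀ k : ℕ, 0 < k →
      (k : ℝ) ≤ (n : ℝ) ^ ((1 : ℝ) / 8 - ε) →
      |(MP k n : ℝ) -
          π / 16 * k * (n : ℝ) ^ (-(3 : ℝ) / 2) * Real.exp (π * Real.sqrt n / Real.sqrt 2)| ≤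
        C * k ^ 3 * (n : ℝ) ^ (-(7 : ℝ) / 4) * Real.exp (π * Real.sqrt n / Real.sqrt 2) := by
  refine ⟨60000000000, by norm_num, 64, fun n hn k hk hkn => ?_⟩
  have hnR : (64 : ℝ) ≤ n := by exact_mod_cast hn
  have hk8 : (k : ℝ) ^ 8 ≤ n := by
    have h1 : (k : ℝ) ≤ (n : ℝ) ^ ((1 : ℝ) / 8) :=
      hkn.trans (Real.rpow_le_rpow_of_exponent_le (by linarith) (by linarith))
    calc (k : ℝ) ^ 8 ≤ ((n : ℝ) ^ ((1 : ℝ) / 8)) ^ 8 := by gcongr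
      _ = (n : ℝ) := by
        rw [← Real.rpow_natCast, ← Real.rpow_mul (by positivity)]; norm_num
  have hEE : 0 ≤ EE n := by rw [EE]; positivity
  have hk1 : (1 : ℝ) ≤ k := by exact_mod_cast hk
  set T : ℕ → ℝ := fun j => (podZ ((n : ℤ) - (j : ℤ) * (2 * j + 1)) : ℝ) -
    podZ ((n : ℤ) - ((j : ℤ) + 1) * (2 * j + 1)) with hT
  have hMP : (MP k n : ℝ) = (-1) ^ (k - 1) * ∑ j ∈ Finset.range k, (-1) ^ j * T j := by
    rw [MP]; push_cast; rfl
  have hkF : (k : ℝ) * FF n =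
      (-1) ^ (k - 1) * ∑ j ∈ Finset.range k, (-1 : ℝ) ^ j * ((2 * j + 1) * FF n) := by
    have h1 : ∑ j ∈ Finset.range k, (-1 : ℝ) ^ j * ((2 * j + 1) * FF n) =
        (-1) ^ (k - 1) * k * FF n := by
      have h2 := alt_sum (k - 1)
      rw [Nat.sub_add_cancel hk, Nat.cast_sub hk] at h2
      simp_rw [← mul_assoc]
      rw [← Finset.sum_mul, h2]; push_cast; ring
    rw [h1, mul_assoc, ← mul_assoc, ← mul_pow]; norm_num
  have hgoal1 : π / 16 * k * (n : ℝ) ^ (-(3 : ℝ) / 2) * Real.exp (π * Real.sqrt n / Real.sqrt 2) =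
      k * FF n := by rw [FF]; ring
  have hgoal2 : 60000000000 * (k : ℝ) ^ 3 * (n : ℝ) ^ (-(7 : ℝ) / 4) *
      Real.exp (π * Real.sqrt n / Real.sqrt 2) = k ^ 3 * (60000000000 * EE n) := by rw [EE]; ring
  rw [hgoal1, hgoal2, hkF, hMP, ← mul_sub, ← Finset.sum_sub_distrib, abs_mul, abs_pow, abs_neg,
    abs_one, one_pow, one_mul]
  calc |∑ j ∈ Finset.range k, ((-1) ^ j * T j - (-1) ^ j * ((2 * j + 1) * FF n))|
      ≤ ∑ j ∈ Finset.range k, |(-1) ^ j * T j - (-1) ^ j * ((2 * j + 1) * FF n)| :=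
        Finset.abs_sum_le_sum_abs _ _
    _ ≤ ∑ j ∈ Finset.range k, (2 * (j : ℝ) + 1) * (60000000000 * EE n) := by
        refine Finset.sum_le_sum fun j hj => ?_
        rw [← mul_sub, abs_mul, abs_pow, abs_neg, abs_one, one_pow, one_mul]
        exact block_diff hn hk8 (Finset.mem_range.mp hj)
    _ = k ^ 2 * (60000000000 * EE n) := by rw [← Finset.sum_mul, odd_sum]
    _ ≤ k ^ 3 * (60000000000 * EE n) := by
        gcongr
        norm_num
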